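/- arXiv:math/0109006 — 11 statements merged into one kernel-verified Lean document; each statement's English description precedes it below -/
import Mathlib

section
/- Let A be a nonzero unital associative algebra over ℂ and let λ ∈ ℂ. If there exist idempotents q₁, q₂, q₃ ∈ A with q₁ + q₂ + q₃ = λ·1, then λ ∈ {0, 1, 3/2, 2, 3}. -/
/-- If `a`, `b` and `l • 1 - a - b` are idempotents, then the anticommutator of `a` and `b` is an
affine combination of `a + b` and `1`. -/
lemma mul_add_mul_eq_of_idempotents_sum_smul_one {A : Type*} [Ring A] [Algebra ℂ A] {l : ℂ}
    {a b c : A} (ha : a * a = a) (hb : b * b = b) (hc : c * c = c)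
    (hsum : a + b + c = l • (1 : A)) :
    a * b + b * a = (2 * (l - 1)) • (a + b) - (l * (l - 1)) • (1 : A) := by
  obtain rfl : c = l • (1 : A) - a - b := by rw [← hsum]; abel
  simp only [mul_sub, sub_mul, smul_mul_assoc, mul_smul_comm, one_mul, mul_one, ha, hb] at hc
  linear_combination (norm := module) hc

/-- Multiplying the anticommutator relation by the idempotent `a` on the left. -/
lemma mul_mul_self_eq_of_mul_add_mul_eq {A : Type*} [Ring A] [Algebra ℂ A] {l : ℂ}
    {a b : A} (ha : a * a = a)
    (hab : a * b + b * a = (2 * (l - 1)) • (a + b) - (l * (l - 1)) • (1 : A)) :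
    a * b * a = (2 * l - 3) • (a * b) + ((l - 1) * (2 - l)) • a := by
  have h := congrArg (a * ·) hab
  simp only [mul_add, mul_sub, mul_smul_comm, mul_one, ← mul_assoc, ha] at h
  linear_combination (norm := module) h

/-- Multiplying the anticommutator relation by the idempotent `a` on the right. -/
lemma mul_mul_self_eq_of_mul_add_mul_eq' {A : Type*} [Ring A] [Algebra ℂ A] {l : ℂ}
    {a b : A} (ha : a * a = a)
    (hab : a * b + b * a = (2 * (l - 1)) • (a + b) - (l * (l - 1)) • (1 : A)) :
    a * b * a = (2 * l - 3) • (b * a) + ((l - 1) * (2 - l)) • a := by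
  have h := congrArg (· * a) hab
  simp only [add_mul, sub_mul, smul_mul_assoc, one_mul, mul_assoc, ha] at h
  rw [mul_assoc]
  linear_combination (norm := module) h

/-- For commuting idempotents satisfying the anticommutator relation, `a * b` is proportional
to `a`. -/
lemma two_smul_mul_eq_of_commute {A : Type*} [Ring A] [Algebra ℂ A] {l : ℂ} (hl : l ≠ 2)
    {a b : A} (ha : a * a = a) (hcomm : a * b = b * a)
    (hab : a * b + b * a = (2 * (l - 1)) • (a + b) - (l * (l - 1)) • (1 : A)) :
    (2 : ℂ) • (a * b) = (l - 1) • a := by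
  have h := mul_mul_self_eq_of_mul_add_mul_eq ha hab
  have haba : a * b * a = a * b := by rw [mul_assoc, ← hcomm, ← mul_assoc, ha]
  rw [haba] at h
  apply smul_right_injective A (sub_ne_zero.mpr hl.symm)
  linear_combination (norm := module) h

/-- In a nonzero unital associative ℂ-algebra, if three idempotents sum to `λ·1`,
then `λ ∈ {0, 1, 3/2, 2, 3}`. -/
theorem three_idempotents_sum_smul_one {A : Type*} [Ring A] [Algebra ℂ A] [Nontrivial A]
    (lam : ℂ) (q₁ q₂ q₃ : A) (h₁ : q₁ ^ 2 = q₁) (h₂ : q₂ ^ 2 = q₂) (h₃ : q₃ ^ 2 = q₃)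
    (hsum : q₁ + q₂ + q₃ = lam • (1 : A)) :
    lam = 0 ∨ lam = 1 ∨ lam = 3 / 2 ∨ lam = 2 ∨ lam = 3 := by
  by_contra! hne
  obtain ⟨hl0, hl1, hl32, hl2, hl3⟩ := hne
  rw [sq] at h₁ h₂ h₃
  have hab := mul_add_mul_eq_of_idempotents_sum_smul_one h₁ h₂ h₃ hsum
  have hcomm : q₁ * q₂ = q₂ * q₁ := by
    have hl : 2 * lam - 3 ≠ 0 := fun h => hl32 (by linear_combination h / 2)
    apply smul_right_injective A hl
    linear_combination (norm := module) mul_mul_self_eq_of_mul_add_mul_eq' h₁ hab -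
      mul_mul_self_eq_of_mul_add_mul_eq h₁ hab
  have hq₁ := two_smul_mul_eq_of_commute hl2 h₁ hcomm hab
  have hq₂ := two_smul_mul_eq_of_commute hl2 h₂ hcomm.symm
    (by rw [add_comm, hab, add_comm q₁])
  obtain rfl : q₁ = q₂ := by
    apply smul_right_injective A (sub_ne_zero.mpr hl1)
    change (lam - 1) • q₁ = (lam - 1) • q₂
    rw [← hq₁, ← hq₂, hcomm]
  obtain rfl : q₁ = 0 := by
    rw [h₁] at hq₁
    have h : (lam - 3) • q₁ = 0 := by linear_combination (norm := module) -hq₁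
    exact (smul_eq_zero.mp h).resolve_left (sub_ne_zero.mpr hl3)
  have h : (lam * (lam - 1)) • (1 : A) = 0 := by simpa using hab
  exact (smul_ne_zero (mul_ne_zero hl0 (sub_ne_zero.mpr hl1)) one_ne_zero) h
end

section
/- Let A be a nonzero unital associative algebra over ℂ and let q₁, q₂, q₃ ∈ A be idempotents with q₁ + q₂ + q₃ = (3/2)·1. Then the unital ℂ-subalgebra of A generated by q₁, q₂, q₃ is isomorphic, as a ℂ-algebra, to the algebra M₂(ℂ) of 2×2 complex matrices. -/
/-- The algebra homomorphism from `2 × 2` matrices determined by a system of matrix units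
`p, b, c, 1 - p` of an algebra. -/
def matrixUnitsHom {R A : Type*} [CommRing R] [Ring A] [Algebra R A] (p b c : A)
    (hp : p * p = p) (hpb : p * b = b) (hbp : b * p = 0) (hcp : c * p = c) (hpc : p * c = 0)
    (hbc : b * c = p) (hcb : c * b = 1 - p) : Matrix (Fin 2) (Fin 2) R →ₐ[R] A :=
  have hbb : b * b = 0 := by rw [← hpb, mul_assoc, ← mul_assoc b, hbp, zero_mul, mul_zero]
  have hcc : c * c = 0 := by rw [← hcp, mul_assoc, ← mul_assoc p, hpc, zero_mul, mul_zero]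
  AlgHom.ofLinearMap
    { toFun := fun M => M 0 0 • p + M 0 1 • b + M 1 0 • c + M 1 1 • (1 - p)
      map_add' := fun M N => by simp only [Matrix.add_apply]; module
      map_smul' := fun r M => by
        simp only [Matrix.smul_apply, smul_eq_mul, RingHom.id_apply]; module }
    (by simp)
    (fun M N => by
      simp only [LinearMap.coe_mk, AddHom.coe_mk, Matrix.mul_apply, Fin.sum_univ_two, mul_add,
        add_mul, mul_sub, sub_mul, smul_mul_smul_comm, smul_sub, mul_one, one_mul, hp, hpb, hbp,
        hcp, hpc, hbc, hcb, hbb, hcc, smul_zero]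
      module)

theorem matrixUnitsHom_apply {R A : Type*} [CommRing R] [Ring A] [Algebra R A] (p b c : A)
    (hp : p * p = p) (hpb : p * b = b) (hbp : b * p = 0) (hcp : c * p = c) (hpc : p * c = 0)
    (hbc : b * c = p) (hcb : c * b = 1 - p) (M : Matrix (Fin 2) (Fin 2) R) :
    matrixUnitsHom p b c hp hpb hbp hcp hpc hbc hcb M =
      M 0 0 • p + M 0 1 • b + M 1 0 • c + M 1 1 • (1 - p) :=
  rfl

/-- If three idempotents in a nonzero unital associative ℂ-algebra sum to `(3/2)·1`,
then the unital subalgebra they generate is isomorphic to `M₂(ℂ)`. -/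
theorem three_idempotents_sum_three_halves_gen_matrix_algebra
    {A : Type*} [Ring A] [Algebra ℂ A] [Nontrivial A]
    (q₁ q₂ q₃ : A) (h₁ : q₁ ^ 2 = q₁) (h₂ : q₂ ^ 2 = q₂) (h₃ : q₃ ^ 2 = q₃)
    (hsum : q₁ + q₂ + q₃ = ((3 : ℂ) / 2) • (1 : A)) :
    Nonempty (Algebra.adjoin ℂ ({q₁, q₂, q₃} : Set A) ≃ₐ[ℂ] Matrix (Fin 2) (Fin 2) ℂ) := by
  rw [sq] at h₁ h₂ h₃
  obtain rfl : q₃ = ((3 : ℂ) / 2) • (1 : A) - q₁ - q₂ := by rw [← hsum]; abel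
  have hanti : q₂ * q₁ = q₁ + q₂ - ((3 : ℂ) / 4) • (1 : A) - q₁ * q₂ := by
    simp only [mul_sub, sub_mul, smul_mul_assoc, mul_smul_comm, one_mul, mul_one, h₁, h₂] at h₃
    linear_combination (norm := module) (1 : ℂ) • h₃
  -- `w` anticommutes with the reflection `2 q₁ - 1`, and its square is a nonzero scalar.
  obtain ⟨w, hw⟩ : ∃ w, w = (2 : ℂ) • q₂ + q₁ - ((3 : ℂ) / 2) • (1 : A) := ⟨_, rfl⟩
  have hq₂ : q₂ = ((1 : ℂ) / 2) • w - ((1 : ℂ) / 2) • q₁ + ((3 : ℂ) / 4) • (1 : A) := by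
    rw [hw]; module
  have hwq : w * q₁ = w - q₁ * w := by
    simp only [hw, mul_sub, sub_mul, mul_add, add_mul, smul_mul_assoc, mul_smul_comm, one_mul,
      mul_one, h₁, hanti]
    module
  have hww : w * w = ((3 : ℂ) / 4) • (1 : A) := by
    simp only [hw, mul_sub, sub_mul, mul_add, add_mul, smul_mul_assoc, mul_smul_comm, one_mul,
      mul_one, h₁, h₂, hanti]
    module
  have hqqw : q₁ * (q₁ * w) = q₁ * w := by rw [← mul_assoc, h₁]
  have hqwq : q₁ * w * q₁ = 0 := by rw [mul_assoc, hwq, mul_sub, hqqw, sub_self]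
  have hqww : q₁ * w * w = ((3 : ℂ) / 4) • q₁ := by
    rw [mul_assoc, hww, mul_smul_comm, mul_one]
  have hwqw : w * (q₁ * w) = ((3 : ℂ) / 4) • (1 - q₁) := by
    rw [← mul_assoc, hwq, sub_mul, hww, hqww, smul_sub]
  have hqwqw : q₁ * w * (q₁ * w) = 0 := by rw [← mul_assoc, hqwq, zero_mul]
  let f := matrixUnitsHom (R := ℂ) q₁ (q₁ * w) (((4 : ℂ) / 3) • (w - q₁ * w)) h₁ hqqw hqwq
    (by rw [smul_mul_assoc, sub_mul, hqwq, hwq, sub_zero])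
    (by rw [mul_smul_comm, mul_sub, hqqw, sub_self, smul_zero])
    (by rw [mul_smul_comm, mul_sub, hqww, hqwqw]; module)
    (by rw [smul_mul_assoc, sub_mul, hwqw, hqwqw]; module)
  have hf (M : Matrix (Fin 2) (Fin 2) ℂ) : f M = M 0 0 • q₁ + M 0 1 • (q₁ * w) +
      M 1 0 • (((4 : ℂ) / 3) • (w - q₁ * w)) + M 1 1 • (1 - q₁) :=
    matrixUnitsHom_apply ..
  have hf₁ : f !![1, 0; 0, 0] = q₁ := by simp [hf]
  have hf₂ : f !![1 / 4, 1 / 2; 3 / 8, 3 / 4] = q₂ := by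
    rw [hf, hq₂]
    simp only [Matrix.of_apply, Matrix.cons_val]
    module
  have hrange : f.range = Algebra.adjoin ℂ {q₁, q₂, ((3 : ℂ) / 2) • (1 : A) - q₁ - q₂} := by
    apply le_antisymm
    · set S := Algebra.adjoin ℂ {q₁, q₂, ((3 : ℂ) / 2) • (1 : A) - q₁ - q₂}
      have hq₁S : q₁ ∈ S := Algebra.subset_adjoin (by simp)
      have hq₂S : q₂ ∈ S := Algebra.subset_adjoin (by simp)
      have hwS : w ∈ S := hw ▸
        sub_mem (add_mem (S.smul_mem hq₂S _) hq₁S) (S.smul_mem (one_mem S) _)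
      have hqwS : q₁ * w ∈ S := mul_mem hq₁S hwS
      rintro _ ⟨M, rfl⟩
      exact add_mem (add_mem (add_mem (S.smul_mem hq₁S _) (S.smul_mem hqwS _))
        (S.smul_mem (S.smul_mem (sub_mem hwS hqwS) _) _))
        (S.smul_mem (sub_mem (one_mem S) hq₁S) _)
    · have hq₁f : q₁ ∈ f.range := ⟨_, hf₁⟩
      have hq₂f : q₂ ∈ f.range := ⟨_, hf₂⟩
      rw [Algebra.adjoin_le_iff]
      rintro _ (rfl | rfl | rfl)
      · exact hq₁f
      · exact hq₂f
      · exact sub_mem (sub_mem (f.range.smul_mem (one_mem _) _) hq₁f) hq₂f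
  have hinj : Function.Injective f := f.toRingHom.injective
  exact ⟨((AlgEquiv.ofInjective f hinj).trans (Subalgebra.equivOfEq _ _ hrange)).symm⟩
end

section
/- Let H be a nonzero complex Hilbert space and let Q be a bounded linear operator on H with Q² = Q. Suppose that the only closed subspaces K ⊆ H invariant under both Q and its Hilbert-space adjoint Q* (i.e. Q(K) ⊆ K and Q*(K) ⊆ K) are {0} and H. Then H is finite dimensional of dimension at most 2. -/
/-- Schur's lemma for a self-adjoint operator: if the closed subspaces invariant under every member
of `S` are trivial, then a self-adjoint operator commuting with `S` is a real scalar. -/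
theorem IsSelfAdjoint.exists_eq_algebraMap_of_irreducible
    {H : Type*} [NormedAddCommGroup H] [InnerProductSpace ℂ H] [CompleteSpace H]
    [Nontrivial H] {S : Set (H →L[ℂ] H)}
    (hS : ∀ K : Submodule ℂ H, IsClosed (K : Set H) →
      (∀ A ∈ S, ∀ x ∈ K, A x ∈ K) → K = ⊥ ∨ K = ⊤)
    {T : H →L[ℂ] H} (hT : IsSelfAdjoint T) (hTS : ∀ A ∈ S, Commute T A) :
    ∃ c : ℝ, T = algebraMap ℝ (H →L[ℂ] H) c := by
  have injective_or_zero (f : ℝ → ℝ) : LinearMap.ker (cfc f T).toLinearMap = ⊥ ∨ cfc f T = 0 := by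
    refine (hS _ (cfc f T).isClosed_ker ?_).imp_right fun h ↦ ?_
    · intro A hA x hx
      have hcomm : Commute (cfc f T) A :=
        IsSelfAdjoint.commute_cfc hT (hTS A hA) f
      have := congr($hcomm.eq x)
      simp_all
    · ext x
      have : x ∈ LinearMap.ker (cfc f T).toLinearMap := h ▸ Submodule.mem_top
      simpa using this
  have vanish {f : ℝ → ℝ} (hf : Continuous f) (h : cfc f T = 0) {x : ℝ}
      (hx : x ∈ spectrum ℝ T) : f x = 0 := by
    have hmem : f x ∈ spectrum ℝ (cfc f T) := by
      rw [cfc_map_spectrum f T hT hf.continuousOn]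
      exact ⟨x, hx, rfl⟩
    simpa [h, spectrum.zero_eq] using hmem
  have not_lt {a b : ℝ} (ha : a ∈ spectrum ℝ T) (hb : b ∈ spectrum ℝ T) : ¬ a < b := by
    intro hab
    let f : ℝ → ℝ := fun x ↦ max (x - (a + b) / 2) 0
    let g : ℝ → ℝ := fun x ↦ max ((a + b) / 2 - x) 0
    have hf : Continuous f := by fun_prop
    have hg : Continuous g := by fun_prop
    have hmul : cfc f T * cfc g T = 0 := by
      rw [← cfc_mul f g T hf.continuousOn hg.continuousOn, ← cfc_zero ℝ T]
      congr 1
      ext x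
      rcases le_total x ((a + b) / 2) with h | h <;> simp [f, g, h]
    have hfT : cfc f T ≠ 0 := fun h ↦ by
      have : b - (a + b) / 2 ≤ 0 := max_eq_right_iff.mp (vanish hf h hb)
      linarith
    have hgT : cfc g T ≠ 0 := fun h ↦ by
      have : (a + b) / 2 - a ≤ 0 := max_eq_right_iff.mp (vanish hg h ha)
      linarith
    refine hgT (ContinuousLinearMap.ext fun x ↦ ?_)
    exact LinearMap.ker_eq_bot'.mp ((injective_or_zero f).resolve_right hfT) _ congr($hmul x)
  obtain ⟨c, hc⟩ := ContinuousFunctionalCalculus.spectrum_nonempty (R := ℝ) T hT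
  refine ⟨c, CFC.eq_algebraMap_of_spectrum_subset_singleton T c (fun x hx ↦ ?_) hT⟩
  exact le_antisymm (_root_.not_lt.mp (not_lt hc hx)) (_root_.not_lt.mp (not_lt hx hc))

/-- The square of the difference of two idempotents commutes with the first of them. -/
theorem IsIdempotentElem.commute_sub_mul_sub {R : Type*} [Ring R] {p q : R}
    (hp : IsIdempotentElem p) (hq : IsIdempotentElem q) :
    Commute ((p - q) * (p - q)) p := by
  have hp' (r : R) : p * (p * r) = p * r := by rw [← mul_assoc, hp.eq]
  simp only [Commute, SemiconjBy, mul_sub, sub_mul, mul_assoc, hp.eq, hq.eq, hp']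
  abel

/-- If `Q` is a bounded idempotent on a nonzero complex Hilbert space and the only
closed subspaces invariant under both `Q` and `Q*` are `{0}` and `H`, then
`H` is finite dimensional of dimension at most `2`. -/
theorem irreducible_idempotent_dim_le_two
    {H : Type*} [NormedAddCommGroup H] [InnerProductSpace ℂ H] [CompleteSpace H]
    [Nontrivial H] (Q : H →L[ℂ] H) (hQ : Q ∘L Q = Q)
    (hirr : ∀ K : Submodule ℂ H, IsClosed (K : Set H) →
      (∀ x ∈ K, Q x ∈ K) → (∀ x ∈ K, ContinuousLinearMap.adjoint Q x ∈ K) →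
      K = ⊥ ∨ K = ⊤) :
    FiniteDimensional ℂ H ∧ Module.finrank ℂ H ≤ 2 := by
  set P := ContinuousLinearMap.adjoint Q
  have hQi : IsIdempotentElem Q := hQ
  have hPi : IsIdempotentElem P := hQi.star
  -- It suffices to find a nonzero `x` such that the span of `x` and `P x` is invariant.
  suffices h : ∃ x : H, x ≠ 0 ∧ Q x ∈ Submodule.span ℂ {x, P x} ∧
      Q (P x) ∈ Submodule.span ℂ {x, P x} by
    classical
    obtain ⟨x, hx, hQx, hQPx⟩ := h
    have hfin : FiniteDimensional ℂ (Submodule.span ℂ {x, P x}) :=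
      FiniteDimensional.span_of_finite ℂ (by simp)
    have hxK : x ∈ Submodule.span ℂ {x, P x} := Submodule.subset_span (by simp)
    have hPxK : P x ∈ Submodule.span ℂ {x, P x} := Submodule.subset_span (by simp)
    have hPPx : P (P x) = P x := congr($hPi.eq x)
    have htop : Submodule.span ℂ {x, P x} = ⊤ := by
      refine (hirr _ (Submodule.closed_of_finiteDimensional _) ?_ ?_).resolve_left fun h ↦ ?_
      · intro y hy
        obtain ⟨a, b, rfl⟩ := Submodule.mem_span_pair.mp hy
        simpa using add_mem (Submodule.smul_mem _ a hQx) (Submodule.smul_mem _ b hQPx)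
      · intro y hy
        obtain ⟨a, b, rfl⟩ := Submodule.mem_span_pair.mp hy
        simpa [hPPx] using add_mem (Submodule.smul_mem _ a hPxK) (Submodule.smul_mem _ b hPxK)
      · rw [h] at hxK
        exact hx (by simpa using hxK)
    refine ⟨Module.finite_def.mpr ⟨{x, P x}, by simpa using htop⟩, ?_⟩
    rw [← finrank_top ℂ H, ← htop]
    have := finrank_span_finset_le_card (R := ℂ) ({x, P x} : Finset H)
    simp only [Finset.coe_insert, Finset.coe_singleton] at this
    exact this.trans Finset.card_le_two
  by_cases hQ0 : Q = 0
  · obtain ⟨x, hx⟩ := exists_ne (0 : H)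
    exact ⟨x, hx, by simp [hQ0], by simp [hQ0]⟩
  obtain ⟨y, hy⟩ : ∃ y, Q y ≠ 0 := by
    by_contra! h
    exact hQ0 (ContinuousLinearMap.ext h)
  have hsa : IsSelfAdjoint ((Q - P) * (Q - P)) := by
    have hQs : star Q = P := rfl
    have hPs : star P = Q := by rw [← hQs, star_star]
    simp only [IsSelfAdjoint, star_mul, star_sub, hQs, hPs]
    noncomm_ring
  obtain ⟨c, hc⟩ := hsa.exists_eq_algebraMap_of_irreducible (S := {Q, P})
    (fun K hK h ↦ hirr K hK (h Q (by simp)) (h P (by simp))) (by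
      rintro A (rfl | rfl)
      · exact hQi.commute_sub_mul_sub hPi
      · have := hPi.commute_sub_mul_sub hQi
        rwa [← neg_sub Q, neg_mul_neg] at this)
  have hQQ (z : H) : Q (Q z) = Q z := congr($hQ z)
  have hPP : P (P (Q y)) = P (Q y) := congr($hPi.eq (Q y))
  refine ⟨Q y, hy, by rw [hQQ]; exact Submodule.subset_span (by simp),
    Submodule.mem_span_pair.mpr ⟨1 - (c : ℂ), 0, ?_⟩⟩
  have hcy : Q y - Q (P (Q y)) = (c : ℂ) • Q y := by
    have := congr($hc (Q y))
    simpa [hQQ, hPP, Algebra.algebraMap_eq_smul_one] using this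
  rw [sub_smul, ← hcy]
  simp
end

section
/- Let λ ∈ ℂ. There exist a natural number d ≥ 1 and d×d complex matrices Q₁, Q₂, Q₃, Q₄ with Qₖ² = Qₖ for all k and Q₁ + Q₂ + Q₃ + Q₄ = λ·I if and only if λ = 2 or λ = 2 + 2/k or λ = 2 − 2/k for some positive integer k. -/
open Matrix

/-- If a finite set of scalars containing `t` is closed under `s ↦ -s` away from `s ^ 2 = 1` and under
`s ↦ 2 * c - s` away from `(c - s) ^ 2 = 1`, then the progression `t, t + c, t + 2 * c, …` reaches
a square root of `1`. -/
lemma exists_add_mul_sq_eq_one {S : Set ℂ} (hS : S.Finite) {c t : ℂ} (hc : c ≠ 0) (ht : t ∈ S)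
    (hneg : ∀ s ∈ S, s ^ 2 ≠ 1 → -s ∈ S)
    (hrefl : ∀ s ∈ S, (c - s) ^ 2 ≠ 1 → 2 * c - s ∈ S) :
    ∃ m : ℕ, (t + m * c) ^ 2 = 1 := by
  by_contra! h
  have hmem : ∀ n : ℕ, t + 2 * n * c ∈ S := by
    intro n
    induction n with
    | zero => simpa using ht
    | succ n ih =>
      have h₁ := hneg _ ih (by simpa using h (2 * n))
      have h₂ := hrefl _ h₁ (by
        convert h (2 * n + 1) using 2
        push_cast
        ring)
      convert h₂ using 1
      push_cast
      ring
  refine Set.infinite_of_injective_forall_mem (f := fun n : ℕ => t + 2 * n * c) ?_ hmem hS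
  intro m n hmn
  simpa [hc] using hmn

/-- Under the hypotheses of `exists_add_mul_sq_eq_one`, the progression
`t - c, t - 2 * c, …` also reaches a square root of `1`. -/
lemma exists_sub_succ_mul_sq_eq_one {S : Set ℂ} (hS : S.Finite) {c t : ℂ} (hc : c ≠ 0)
    (ht : t ∈ S) (hneg : ∀ s ∈ S, s ^ 2 ≠ 1 → -s ∈ S)
    (hrefl : ∀ s ∈ S, (c - s) ^ 2 ≠ 1 → 2 * c - s ∈ S) :
    ∃ m : ℕ, (t - (m + 1) * c) ^ 2 = 1 := by
  by_contra! hne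
  have hmem : ∀ n : ℕ, t - 2 * n * c ∈ S := by
    intro n
    induction n with
    | zero => simpa using ht
    | succ n ih =>
      have h₁ := hrefl _ ih (fun h0 => hne (2 * n) (by
        push_cast
        linear_combination h0))
      have h₂ := hneg _ h₁ (fun h0 => hne (2 * n + 1) (by
        push_cast
        linear_combination h0))
      convert h₂ using 1
      push_cast
      ring
  refine Set.infinite_of_injective_forall_mem (f := fun n : ℕ => t - 2 * n * c) ?_ hmem hS
  intro m n hmn
  simpa [hc] using hmn

lemma eq_two_div_of_reflection_closed {S : Set ℂ} (hS : S.Finite) (hne : S.Nonempty) {c : ℂ}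
    (hc : c ≠ 0) (hneg : ∀ s ∈ S, s ^ 2 ≠ 1 → -s ∈ S)
    (hrefl : ∀ s ∈ S, (c - s) ^ 2 ≠ 1 → 2 * c - s ∈ S) :
    ∃ k : ℕ, 0 < k ∧ (c = 2 / (k : ℂ) ∨ c = -(2 / (k : ℂ))) := by
  obtain ⟨t, ht⟩ := hne
  obtain ⟨m, hm⟩ := exists_add_mul_sq_eq_one hS hc ht hneg hrefl
  obtain ⟨n, hn⟩ := exists_sub_succ_mul_sq_eq_one hS hc ht hneg hrefl
  have hk : ((m + n + 1 : ℕ) : ℂ) ≠ 0 := Nat.cast_ne_zero.mpr (by omega)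
  refine ⟨m + n + 1, by omega, ?_⟩
  rw [← neg_div, eq_div_iff hk, eq_div_iff hk]
  have h0 : c * ((m + n + 1 : ℕ) : ℂ) ≠ 0 := mul_ne_zero hc hk
  push_cast at h0 ⊢
  rcases sq_eq_one_iff.mp hm with hm | hm <;>
    rcases sq_eq_one_iff.mp hn with hn | hn
  · exact absurd (by linear_combination hm - hn) h0
  · exact Or.inl (by linear_combination hm - hn)
  · exact Or.inr (by linear_combination hm - hn)
  · exact absurd (by linear_combination hm - hn) h0

/-- If `P` and `Q` are idempotent and `w` is an eigenvector of `P + Q - 1` with eigenvalue `s`,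
then `(P - Q) w` is an eigenvector with eigenvalue `-s`, unless `s ^ 2 = 1`. -/
lemma exists_eigenvector_neg {n : Type*} [Fintype n] [DecidableEq n] {P Q : Matrix n n ℂ}
    (hP : P ^ 2 = P) (hQ : Q ^ 2 = Q) {s : ℂ} {w : n → ℂ} (hw : w ≠ 0)
    (hs : (P + Q - 1) *ᵥ w = s • w) (hs1 : s ^ 2 ≠ 1) :
    ∃ w' : n → ℂ, w' ≠ 0 ∧ (P + Q - 1) *ᵥ w' = (-s) • w' := by
  rw [sq] at hP hQ
  have hanti : (P + Q - 1) * (P - Q) = -((P - Q) * (P + Q - 1)) := by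
    simp only [mul_sub, sub_mul, add_mul, mul_add, hP, hQ, mul_one, one_mul]
    abel
  have hsq : (P - Q) * (P - Q) = 1 - (P + Q - 1) * (P + Q - 1) := by
    simp only [mul_sub, sub_mul, add_mul, mul_add, hP, hQ, mul_one, one_mul]
    abel
  refine ⟨(P - Q) *ᵥ w, fun h0 => ?_, ?_⟩
  · have h : ((P - Q) * (P - Q)) *ᵥ w = 0 := by rw [← mulVec_mulVec, h0, mulVec_zero]
    rw [hsq, sub_mulVec, one_mulVec, ← mulVec_mulVec, hs, mulVec_smul, hs, smul_smul] at h
    have h' : (1 - s * s) • w = 0 := by rw [sub_smul, one_smul, h]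
    rcases smul_eq_zero.mp h' with h' | h'
    · exact hs1 (by linear_combination -h')
    · exact hw h'
  · rw [mulVec_mulVec, hanti, neg_mulVec, ← mulVec_mulVec, hs, mulVec_smul, neg_smul]

lemma eq_two_div_of_sum_idempotent {d : ℕ} (hd : 1 ≤ d) {P₁ Q₁ P₂ Q₂ : Matrix (Fin d) (Fin d) ℂ}
    (hP₁ : P₁ ^ 2 = P₁) (hQ₁ : Q₁ ^ 2 = Q₁) (hP₂ : P₂ ^ 2 = P₂) (hQ₂ : Q₂ ^ 2 = Q₂)
    {c : ℂ} (hc : c ≠ 0) (hsum : (P₁ + Q₁ - 1) + (P₂ + Q₂ - 1) = c • 1) :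
    ∃ k : ℕ, 0 < k ∧ (c = 2 / (k : ℂ) ∨ c = -(2 / (k : ℂ))) := by
  have : Nonempty (Fin d) := ⟨⟨0, hd⟩⟩
  set X := P₁ + Q₁ - 1 with hX
  have hU : P₂ + Q₂ - 1 = c • 1 - X := by rw [← hsum]; abel
  have hS : {s : ℂ | ∃ w, w ≠ 0 ∧ X *ᵥ w = s • w} = {s | Module.End.HasEigenvalue (toLin' X) s} := by
    ext s
    constructor
    · rintro ⟨w, hw, h⟩
      exact Module.End.hasEigenvalue_of_hasEigenvector
        (Module.End.hasEigenvector_iff.mpr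
          ⟨Module.End.mem_eigenspace_iff.mpr (by simpa using h), hw⟩)
    · intro h
      obtain ⟨w, hw⟩ := h.exists_hasEigenvector
      exact ⟨w, hw.2, by simpa using hw.apply_eq_smul⟩
  refine eq_two_div_of_reflection_closed (S := {s | ∃ w, w ≠ 0 ∧ X *ᵥ w = s • w}) ?_ ?_ hc ?_ ?_
  · rw [hS]
    exact Module.End.finite_hasEigenvalue _
  · rw [hS]
    exact Module.End.exists_eigenvalue _
  · rintro s ⟨w, hw, hs⟩ hs1
    exact exists_eigenvector_neg hP₁ hQ₁ hw hs hs1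
  · rintro s ⟨w, hw, hs⟩ hs1
    obtain ⟨w', hw', h⟩ := exists_eigenvector_neg hP₂ hQ₂ hw (s := c - s)
      (by rw [hU, sub_mulVec, hs, smul_mulVec, one_mulVec, sub_smul]) hs1
    refine ⟨w', hw', ?_⟩
    rw [hU, sub_mulVec, smul_mulVec, one_mulVec] at h
    rw [← sub_sub_self (c • w') (X *ᵥ w'), h, ← sub_smul]
    congr 1
    ring

/-- A diagonal matrix `1 + diagonal a` is a sum of two idempotents as soon as an involution of the
index set negates `a` off the fixed points and `a = ±1` at the fixed points. -/
lemma exists_idempotent_add_eq_one_add_diagonal {n : Type*} [Fintype n] [DecidableEq n]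
    {σ : n → n} (hσ : Function.Involutive σ) {a : n → ℂ}
    (ha : ∀ i, (σ i = i ∧ a i ^ 2 = 1) ∨ a (σ i) = -a i) :
    ∃ P Q : Matrix n n ℂ, P ^ 2 = P ∧ Q ^ 2 = Q ∧ P + Q = 1 + diagonal a := by
  choose r hr using fun z : ℂ => IsAlgClosed.exists_pow_nat_eq z two_pos
  let b : n → ℂ := fun i => r (1 - a i ^ 2)
  have hb : ∀ i, b i ^ 2 = 1 - a i ^ 2 := fun i => hr _
  have hbσ : ∀ i, b (σ i) = b i := fun i => by
    rcases ha i with ⟨h, -⟩ | h <;> simp [b, h]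
  have hab : ∀ i, b i * (a i + a (σ i)) = 0 := fun i => by
    rcases ha i with ⟨-, h⟩ | h
    · have : b i = 0 := pow_eq_zero_iff two_ne_zero |>.mp (by rw [hb, h, sub_self])
      rw [this, zero_mul]
    · rw [h, add_neg_cancel, mul_zero]
  let B : Matrix n n ℂ := of fun i j => if j = σ i then b i else 0
  have hBB : B * B = 1 - diagonal a * diagonal a := by
    ext i j
    simp only [B, mul_apply, of_apply, ite_mul, zero_mul, Finset.sum_ite_eq',
      Finset.mem_univ, if_true, hσ i, hbσ, diagonal_mul_diagonal, Matrix.sub_apply, one_apply,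
      diagonal_apply]
    rcases eq_or_ne i j with rfl | h
    · simpa [sq] using hb i
    · simp [h, h.symm]
  have hDB : diagonal a * B = -(B * diagonal a) := by
    ext i j
    simp only [B, diagonal_mul, mul_diagonal, Matrix.neg_apply, of_apply]
    split_ifs with h
    · subst h
      linear_combination hab i
    · simp
  refine ⟨(2⁻¹ : ℂ) • (1 + diagonal a + B), (2⁻¹ : ℂ) • (1 + diagonal a - B), ?_, ?_, ?_⟩
  · have h : (1 + diagonal a + B) * (1 + diagonal a + B) = (2 : ℂ) • (1 + diagonal a + B) := by
      simp only [mul_add, add_mul, mul_one, one_mul, hBB, hDB, two_smul]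
      abel
    rw [sq, smul_mul_smul_comm, h, smul_smul]
    norm_num
  · have h : (1 + diagonal a - B) * (1 + diagonal a - B) = (2 : ℂ) • (1 + diagonal a - B) := by
      simp only [mul_add, add_mul, mul_sub, sub_mul, mul_one, one_mul, hBB, hDB, two_smul]
      abel
    rw [sq, smul_mul_smul_comm, h, smul_smul]
    norm_num
  · rw [← smul_add, add_add_sub_cancel, ← two_smul ℂ, smul_smul]
    norm_num

/-- The involution of `{0, …, k - 1}` exchanging `i` and `i + 1` for each `i` of the same parity as
`p`, and fixing the indices left without a partner. -/
def adjacentSwap (k p : ℕ) (i : Fin k) : Fin k :=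
  if (i.val + p) % 2 = 0 then (if h : i.val + 1 < k then ⟨i.val + 1, h⟩ else i)
  else ⟨i.val - 1, by omega⟩

lemma adjacentSwap_involutive (k p : ℕ) : Function.Involutive (adjacentSwap k p) := by
  rintro ⟨i, hi⟩
  unfold adjacentSwap
  grind

lemma exists_idempotents_sum_two_add_two_div {k : ℕ} (hk : 0 < k) :
    ∃ Q : Fin 4 → Matrix (Fin k) (Fin k) ℂ,
      (∀ j, Q j ^ 2 = Q j) ∧ ∑ j, Q j = (2 + 2 / (k : ℂ)) • (1 : Matrix (Fin k) (Fin k) ℂ) := by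
  have hk0 : (k : ℂ) ≠ 0 := Nat.cast_ne_zero.mpr hk.ne'
  obtain ⟨c, hc⟩ : ∃ c : ℂ, c = 2 / k := ⟨_, rfl⟩
  have hkc : (k : ℂ) * c = 2 := by rw [hc]; field_simp
  let a : Fin k → ℂ := fun i => if i.val % 2 = 0 then 1 - i.val * c else (i.val + 1) * c - 1
  obtain ⟨P₁, Q₁, hP₁, hQ₁, h₁⟩ := exists_idempotent_add_eq_one_add_diagonal
    (adjacentSwap_involutive k 1) (a := a) (by
      rintro ⟨i, hi⟩
      rcases Nat.even_or_odd' i with ⟨m, rfl | rfl⟩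
      · rcases m with _ | m
        · left
          simp [adjacentSwap, a]
        · right
          have h : 2 * (m + 1) - 1 = 2 * m + 1 := by omega
          simp [adjacentSwap, a, h]
          exact Or.inl (by ring)
      · have h₁ : (2 * m + 1 + 1) % 2 = 0 := by omega
        by_cases h : 2 * m + 1 + 1 < k
        · right
          simp [adjacentSwap, a, h₁, h]
        · left
          obtain rfl : k = 2 * m + 1 + 1 := by omega
          refine ⟨by simp [adjacentSwap, h₁], ?_⟩
          push_cast at hkc
          simp [a, hkc]
          norm_num)
  obtain ⟨P₂, Q₂, hP₂, hQ₂, h₂⟩ := exists_idempotent_add_eq_one_add_diagonal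
    (adjacentSwap_involutive k 0) (a := fun i => c - a i) (by
      rintro ⟨i, hi⟩
      rcases Nat.even_or_odd' i with ⟨m, rfl | rfl⟩
      · by_cases h : 2 * m + 1 < k
        · right
          simp [adjacentSwap, a, h]
          ring
        · left
          obtain rfl : k = 2 * m + 1 := by omega
          refine ⟨by simp [adjacentSwap], ?_⟩
          push_cast at hkc
          have : c - (1 - 2 * m * c) = 1 := by linear_combination hkc
          simp [a, this]
      · right
        simp [adjacentSwap, a]
        ring)
  refine ⟨![P₁, Q₁, P₂, Q₂], by simp [Fin.forall_fin_succ, *], ?_⟩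
  have h : diagonal a + diagonal (fun i => c - a i) = c • (1 : Matrix (Fin k) (Fin k) ℂ) := by
    rw [diagonal_add, smul_one_eq_diagonal]
    simp
  rw [← hc, add_smul, ← h, two_smul]
  simp only [Fin.sum_univ_four]
  change P₁ + Q₁ + P₂ + Q₂ = _
  rw [h₁, add_assoc, h₂]
  abel

/-- There exist four idempotent `d×d` complex matrices (for some `d ≥ 1`) summing to
`λ·I` if and only if `λ = 2` or `λ = 2 ± 2/k` for some positive integer `k`. -/
theorem four_idempotent_matrices_sum_iff (lam : ℂ) :
    (∃ d : ℕ, 1 ≤ d ∧ ∃ Q : Fin 4 → Matrix (Fin d) (Fin d) ℂ,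
      (∀ k, Q k ^ 2 = Q k) ∧ ∑ k, Q k = lam • (1 : Matrix (Fin d) (Fin d) ℂ)) ↔
    (lam = 2 ∨ ∃ k : ℕ, 0 < k ∧ (lam = 2 + 2 / (k : ℂ) ∨ lam = 2 - 2 / (k : ℂ))) := by
  constructor
  · rintro ⟨d, hd, Q, hQ, hsum⟩
    refine or_iff_not_imp_left.mpr fun hlam => ?_
    obtain ⟨k, hk, h⟩ := eq_two_div_of_sum_idempotent hd (hQ 0) (hQ 1) (hQ 2) (hQ 3)
      (sub_ne_zero.mpr hlam) (by
        rw [sub_smul, ← hsum, Fin.sum_univ_four, two_smul]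
        abel)
    refine ⟨k, hk, h.imp (fun h => ?_) fun h => ?_⟩ <;> linear_combination h
  · rintro (rfl | ⟨k, hk, rfl | rfl⟩)
    · refine ⟨1, le_rfl, ![1, 1, 0, 0], by simp [Fin.forall_fin_succ], ?_⟩
      simp [Fin.sum_univ_four, two_smul, one_add_one_eq_two]
    · exact ⟨k, hk, exists_idempotents_sum_two_add_two_div hk⟩
    · obtain ⟨Q, hQ, hsum⟩ := exists_idempotents_sum_two_add_two_div hk
      refine ⟨k, hk, fun j => 1 - Q j, fun j => ?_, ?_⟩
      · exact (IsIdempotentElem.one_sub (by simpa [IsIdempotentElem, sq] using hQ j)).pow_eq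
          two_ne_zero
      · rw [Finset.sum_sub_distrib, hsum, Fin.sum_univ_four]
        module
end

section
/- Let A be a unital associative algebra over ℂ, let λ ∈ ℂ with λ ≠ 2, and let x₁, x₂, x₃ ∈ A satisfy the anticommutation relations x₁x₂ + x₂x₁ = x₃, x₂x₃ + x₃x₂ = x₁, x₃x₁ + x₁x₃ = x₂, together with (λ−2)²(x₁² + x₂² + x₃²) = (1 − (λ−2)²/4)·1. Define Q₁ = ((λ−2)/2)(−x₁+x₂+x₃) + (λ/4)·1, Q₂ = ((λ−2)/2)(x₁−x₂+x₃) + (λ/4)·1, Q₃ = ((λ−2)/2)(x₁+x₂−x₃) + (λ/4)·1, Q₄ = ((λ−2)/2)(−x₁−x₂−x₃) + (λ/4)·1. Then Qᵢ² = Qᵢ for i = 1,2,3,4 and Q₁ + Q₂ + Q₃ + Q₄ = λ·1. -/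
/-- If `y ^ 2 = c - y` and `(l - 2) ^ 2 • c = (1 - (l - 2) ^ 2 / 4) • 1`, then
`((l - 2) / 2) • y + (l / 4) • 1` is idempotent. -/
theorem sq_smul_add_smul_one_eq_self {A : Type*} [Ring A] [Algebra ℂ A] (l : ℂ) {c y : A}
    (hc : ((l - 2) ^ 2) • c = (1 - (l - 2) ^ 2 / 4) • (1 : A)) (hy : y ^ 2 = c - y) :
    (((l - 2) / 2) • y + (l / 4) • (1 : A)) ^ 2 = ((l - 2) / 2) • y + (l / 4) • (1 : A) := by
  have expand : (((l - 2) / 2) • y + (l / 4) • (1 : A)) ^ 2 =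
      ((l - 2) / 2) ^ 2 • y ^ 2 + ((l - 2) * l / 4) • y + (l ^ 2 / 16) • (1 : A) := by
    simp only [sq, add_mul, mul_add, smul_mul_smul_comm, mul_one, one_mul]
    module
  rw [expand, hy]
  linear_combination (norm := module) (1 / 4 : ℂ) • hc

/-- Given elements `x₁, x₂, x₃` of a unital ℂ-algebra satisfying the graded `so(3)`
anticommutation relations and the Casimir condition, the four elements `Qᵢ` defined
below are idempotents summing to `λ·1`. -/
theorem graded_so3_gives_four_idempotents {A : Type*} [Ring A] [Algebra ℂ A]
    (lam : ℂ) (hlam : lam ≠ 2) (x₁ x₂ x₃ : A)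
    (h₁₂ : x₁ * x₂ + x₂ * x₁ = x₃)
    (h₂₃ : x₂ * x₃ + x₃ * x₂ = x₁)
    (h₃₁ : x₃ * x₁ + x₁ * x₃ = x₂)
    (hcas : ((lam - 2) ^ 2) • (x₁ ^ 2 + x₂ ^ 2 + x₃ ^ 2) =
      (1 - (lam - 2) ^ 2 / 4) • (1 : A))
    (Q₁ Q₂ Q₃ Q₄ : A)
    (hQ₁ : Q₁ = ((lam - 2) / 2) • (-x₁ + x₂ + x₃) + (lam / 4) • (1 : A))
    (hQ₂ : Q₂ = ((lam - 2) / 2) • (x₁ - x₂ + x₃) + (lam / 4) • (1 : A))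
    (hQ₃ : Q₃ = ((lam - 2) / 2) • (x₁ + x₂ - x₃) + (lam / 4) • (1 : A))
    (hQ₄ : Q₄ = ((lam - 2) / 2) • (-x₁ - x₂ - x₃) + (lam / 4) • (1 : A)) :
    (Q₁ ^ 2 = Q₁ ∧ Q₂ ^ 2 = Q₂ ∧ Q₃ ^ 2 = Q₃ ∧ Q₄ ^ 2 = Q₄) ∧
    Q₁ + Q₂ + Q₃ + Q₄ = lam • (1 : A) := by
  subst hQ₁ hQ₂ hQ₃ hQ₄
  refine ⟨⟨?_, ?_, ?_, ?_⟩, by module⟩ <;> refine sq_smul_add_smul_one_eq_self lam hcas ?_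
  · linear_combination (norm := noncomm_ring) h₂₃ - h₁₂ - h₃₁
  · linear_combination (norm := noncomm_ring) h₃₁ - h₁₂ - h₂₃
  · linear_combination (norm := noncomm_ring) h₁₂ - h₂₃ - h₃₁
  · linear_combination (norm := noncomm_ring) h₁₂ + h₂₃ + h₃₁
end

section
/- Let d ≥ 1, let λ ∈ ℂ with λ ≠ 2, and let Q₁, Q₂, Q₃, Q₄ be d×d complex matrices with Qₖ² = Qₖ for all k and Q₁ + Q₂ + Q₃ + Q₄ = λ·I. Then there exists an invertible d×d complex matrix S such that S⁻¹QₖS is Hermitian (equal to its conjugate transpose) for every k = 1,2,3,4. -/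
namespace FourIdempotents

open Matrix Module
open scoped ComplexOrder MatrixOrder Matrix.Norms.L2Operator

/-- `A` and `B` anticommute and `A² + B² = 1`. The sum minus one and the difference of two
idempotents form such a pair. -/
structure AnticommutingPair {R : Type*} [Ring R] (A B : R) : Prop where
  anti : B * A = -(A * B)
  sq : B * B = 1 - A * A

theorem AnticommutingPair.of_idempotents {R : Type*} [Ring R] {P Q : R}
    (hP : P * P = P) (hQ : Q * Q = Q) : AnticommutingPair (P + Q - 1) (P - Q) where
  anti := by
    simp only [mul_add, add_mul, mul_sub, sub_mul, hP, hQ, mul_one, one_mul]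
    abel
  sq := by
    simp only [mul_add, add_mul, mul_sub, sub_mul, hP, hQ, mul_one, one_mul]
    abel

section Spectrum

variable {V : Type*} [AddCommGroup V] [Module ℂ V]

theorem hasEigenvalue_of_apply {A : End ℂ V} {a : ℂ} {v : V} (hv : v ≠ 0) (h : A v = a • v) :
    A.HasEigenvalue a :=
  End.hasEigenvalue_of_hasEigenvector ⟨End.mem_eigenspace_iff.2 h, hv⟩

theorem AnticommutingPair.apply_apply {A B : End ℂ V} (h : AnticommutingPair A B) (v : V) :
    A (B v) = -B (A v) := by
  have := congr($(h.anti) v)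
  simp only [End.mul_apply, LinearMap.neg_apply] at this
  rw [this, neg_neg]

theorem AnticommutingPair.sq_apply {A B : End ℂ V} (h : AnticommutingPair A B) (v : V) :
    B (B v) = v - A (A v) := by
  simpa using congr($(h.sq) v)

theorem AnticommutingPair.hasEigenvalue_neg {A B : End ℂ V} (h : AnticommutingPair A B) {a : ℂ}
    (ha : A.HasEigenvalue a) (h1 : a ^ 2 ≠ 1) : A.HasEigenvalue (-a) := by
  obtain ⟨v, hv⟩ := ha.exists_hasEigenvector
  have hAv := hv.apply_eq_smul
  refine hasEigenvalue_of_apply (v := B v) (fun h0 => h1 ?_) ?_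
  · have := h.sq_apply v
    rw [h0, map_zero, hAv, map_smul, hAv, smul_smul] at this
    have h2 : (1 - a * a) • v = 0 := by rw [sub_smul, one_smul, ← this]
    linear_combination -(smul_eq_zero.1 h2).resolve_right hv.2
  · rw [h.apply_apply, hAv, map_smul, neg_smul]

theorem hasEigenvalue_of_add_eq {A C : End ℂ V} {μ a b : ℂ} (h : A + C = μ • 1)
    (ha : A.HasEigenvalue a) (hab : a + b = μ) : C.HasEigenvalue b := by
  obtain ⟨v, hv⟩ := ha.exists_hasEigenvector
  refine hasEigenvalue_of_apply hv.2 ?_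
  have := congr($h v)
  simp only [LinearMap.add_apply, LinearMap.smul_apply, End.one_apply, hv.apply_eq_smul] at this
  rw [← hab, add_smul] at this
  exact add_left_cancel this

/-- A property of the points of a finite set cannot propagate along a nonzero translation. -/
theorem not_of_translate {K : Type*} [Field K] [CharZero K] {s : Set K} (hs : s.Finite) {c : K}
    (hc : c ≠ 0) {p : K → Prop} (hp : ∀ a, p a → a ∈ s) (hstep : ∀ a, p a → p (a + c)) (a : K) :
    ¬ p a := by
  intro ha
  have key : ∀ k : ℕ, p (a + k * c) := by
    intro k
    induction k with
    | zero => simpa using ha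
    | succ k ih =>
      convert hstep _ ih using 1
      push_cast
      ring
  refine Set.infinite_of_injective_forall_mem (f := fun k : ℕ => a + k * c) ?_
    (fun k => hp _ (key k)) hs
  intro k l hkl
  simpa [hc] using hkl

theorem AnticommutingPair.exists_jordan_neg {A B : End ℂ V} (h : AnticommutingPair A B)
    (hA : ¬ A.HasEigenvalue (-1)) {a : ℂ} {w : V} (hw : A w = a • w) (hw0 : w ≠ 0) {v : V}
    (hv : A v = a • v + w) : ∃ v' w', w' ≠ 0 ∧ A w' = (-a) • w' ∧ A v' = (-a) • v' + w' := by
  have hcancel : ∀ u, A u = -u → u = 0 := fun u hu => by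
    by_contra h0
    exact hA (hasEigenvalue_of_apply h0 (by rw [hu, neg_one_smul]))
  refine ⟨-B v, B w, fun h0 => ?_, ?_, ?_⟩
  · have h1 := h.sq_apply w
    rw [h0, map_zero, hw, map_smul, hw, smul_smul] at h1
    have h2 : (1 - a * a) • w = 0 := by rw [sub_smul, one_smul, ← h1]
    have h3 : (a - 1) * (a + 1) = 0 := by
      linear_combination -(smul_eq_zero.1 h2).resolve_right hw0
    rcases mul_eq_zero.1 h3 with h4 | h4
    · obtain rfl : a = 1 := sub_eq_zero.1 h4
      rw [one_smul] at hw hv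
      have hBv : B v = 0 := hcancel _ (by rw [h.apply_apply, hv, map_add, h0, add_zero])
      have h5 := h.sq_apply v
      rw [hBv, map_zero, hv, map_add, hv, hw] at h5
      have h6 : (2 : ℂ) • w = 0 := by
        rw [two_smul, show w + w = -(v - (v + w + w)) by abel, ← h5, neg_zero]
      exact hw0 ((smul_eq_zero.1 h6).resolve_left two_ne_zero)
    · obtain rfl : a = -1 := eq_neg_of_add_eq_zero_left h4
      exact hA (hasEigenvalue_of_apply hw0 hw)
  · rw [h.apply_apply, hw, map_smul, neg_smul]
  · rw [map_neg, h.apply_apply, hv, map_add, map_smul]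
    module

variable [FiniteDimensional ℂ V]

theorem im_eq_zero_and_re_le_one {A B C D : End ℂ V} (hAB : AnticommutingPair A B)
    (hCD : AnticommutingPair C D) {μ : ℝ} (hμ : 0 < μ) (h : A + C = (μ : ℂ) • 1) {a : ℂ}
    (ha : A.HasEigenvalue a) : a.im = 0 ∧ a.re ≤ 1 := by
  by_contra hcon
  have hsq : ∀ z : ℂ, z.im ≠ 0 ∨ 1 < z.re → z ^ 2 ≠ 1 := by
    intro z hz h1
    rcases sq_eq_one_iff.1 h1 with rfl | rfl <;> norm_num at hz
  refine not_of_translate (s := {a | A.HasEigenvalue a}) A.finite_hasEigenvalue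
    (c := ((2 * μ : ℝ) : ℂ)) (by exact_mod_cast (by positivity : 2 * μ ≠ 0))
    (p := fun a => A.HasEigenvalue a ∧ (a.im ≠ 0 ∨ 1 < a.re)) (fun a ha => ha.1) ?_ a
    ⟨ha, ?_⟩
  · rintro a ⟨ha, hz⟩
    have h1 := hAB.hasEigenvalue_neg ha (hsq a hz)
    have h2 := hasEigenvalue_of_add_eq h h1 (b := a + μ) (by ring)
    have hz2 : (a + μ).im ≠ 0 ∨ 1 < (a + μ).re := by
      simp only [Complex.add_im, Complex.ofReal_im, add_zero, Complex.add_re, Complex.ofReal_re]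
      exact hz.imp_right fun h => by linarith
    have h3 := hCD.hasEigenvalue_neg h2 (hsq _ hz2)
    refine ⟨hasEigenvalue_of_add_eq (by rw [add_comm]; exact h) h3 (by push_cast; ring), ?_⟩
    simp only [Complex.add_im, Complex.ofReal_im, add_zero, Complex.add_re, Complex.ofReal_re]
    exact hz.imp_right fun h => by linarith
  · by_cases h0 : a.im = 0
    · exact Or.inr (not_le.1 fun h1 => hcon ⟨h0, h1⟩)
    · exact Or.inl h0

theorem sub_one_le_re {A B C D : End ℂ V} (hAB : AnticommutingPair A B)
    (hCD : AnticommutingPair C D) {μ : ℝ} (hμ : 0 < μ) (h : A + C = (μ : ℂ) • 1) {a : ℂ}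
    (ha : A.HasEigenvalue a) : μ - 1 ≤ a.re := by
  have h1 := (im_eq_zero_and_re_le_one hCD hAB hμ (by rw [add_comm]; exact h)
    (hasEigenvalue_of_add_eq h ha (b := μ - a) (by ring))).2
  simp only [Complex.sub_re, Complex.ofReal_re] at h1
  linarith

theorem no_jordan {A B C D : End ℂ V} (hAB : AnticommutingPair A B)
    (hCD : AnticommutingPair C D) {μ : ℝ} (hμ : 0 < μ) (h : A + C = (μ : ℂ) • 1) (a : ℂ) :
    ¬ ∃ v w, w ≠ 0 ∧ A w = a • w ∧ A v = a • v + w := by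
  have h' : C + A = (μ : ℂ) • 1 := by rw [add_comm]; exact h
  have hA : ¬ A.HasEigenvalue (-1) := fun hc => by
    have := sub_one_le_re hAB hCD hμ h hc
    norm_num at this
    linarith
  have hC : ¬ C.HasEigenvalue (-1) := fun hc => by
    have := sub_one_le_re hCD hAB hμ h' hc
    norm_num at this
    linarith
  have transfer : ∀ {A C : End ℂ V} (_ : A + C = (μ : ℂ) • 1) {a b : ℂ} (_ : a + b = μ),
      (∃ v w, w ≠ 0 ∧ A w = a • w ∧ A v = a • v + w) →
      ∃ v w, w ≠ 0 ∧ C w = b • w ∧ C v = b • v + w := by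
    rintro A C h a b hab ⟨v, w, hw0, hw, hv⟩
    have hC : ∀ u, C u = (a + b) • u - A u := fun u => by
      rw [hab, eq_sub_iff_add_eq', ← LinearMap.add_apply, h]
      simp
    refine ⟨v, -w, neg_ne_zero.2 hw0, ?_, ?_⟩
    · rw [hC, map_neg, hw]
      module
    · rw [hC, hv]
      module
  refine not_of_translate (s := {a | A.HasEigenvalue a}) A.finite_hasEigenvalue
    (c := ((2 * μ : ℝ) : ℂ)) (by exact_mod_cast (by positivity : 2 * μ ≠ 0))
    (p := fun a => ∃ v w, w ≠ 0 ∧ A w = a • w ∧ A v = a • v + w) ?_ ?_ a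
  · rintro a ⟨v, w, hw0, hw, -⟩
    exact hasEigenvalue_of_apply hw0 hw
  · rintro a ⟨v, w, hw0, hw, hv⟩
    obtain ⟨v₂, w₂, hw₂0, hw₂, hv₂⟩ := transfer (b := a + μ) h (by ring)
      (hAB.exists_jordan_neg hA hw hw0 hv)
    exact transfer (a := -(a + μ)) h' (by push_cast; ring)
      (hCD.exists_jordan_neg hC hw₂ hw₂0 hv₂)

theorem iSup_eigenspace_eq_top_of_no_jordan {A : End ℂ V}
    (hA : ∀ a : ℂ, ¬ ∃ v w, w ≠ 0 ∧ A w = a • w ∧ A v = a • v + w) :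
    ⨆ a, A.eigenspace a = ⊤ := by
  rw [eq_top_iff, ← End.iSup_maxGenEigenspace_eq_top A]
  refine iSup_mono fun a v hv => ?_
  obtain ⟨k, hk⟩ := (End.mem_maxGenEigenspace _ _ _).1 hv
  rw [End.mem_eigenspace_iff]
  have key : ∀ (k : ℕ) (u : V), ((A - a • (1 : End ℂ V)) ^ k) u = 0 → A u = a • u := by
    intro k
    induction k with
    | zero =>
      intro u hu
      have : u = 0 := by simpa using hu
      simp [this]
    | succ k ih =>
      intro u hu
      rw [pow_succ, End.mul_apply] at hu
      have h1 := ih _ hu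
      by_contra hne
      refine hA a ⟨u, (A - a • (1 : End ℂ V)) u, ?_, h1, ?_⟩
      · simpa [sub_eq_zero] using hne
      · simp
  exact key k v hk

end Spectrum

/-- A matrix with real eigenvalues whose eigenspaces span is similar to a real diagonal matrix. -/
theorem exists_diagonalization {d : ℕ} (A : Matrix (Fin d) (Fin d) ℂ)
    (hA : ⨆ a, End.eigenspace (toLin' A) a = ⊤)
    (hreal : ∀ a, End.HasEigenvalue (toLin' A) a → a.im = 0) :
    ∃ (P : Matrix (Fin d) (Fin d) ℂ) (α : Fin d → ℝ), IsUnit P ∧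
      (∀ i, End.HasEigenvalue (toLin' A) (α i)) ∧ A * P = P * diagonal fun i => (α i : ℂ) := by
  let t : Set (Fin d → ℂ) := ⋃ a, (End.eigenspace (toLin' A) a : Set (Fin d → ℂ))
  obtain ⟨b, hbt, hspan, hli⟩ := exists_linearIndependent ℂ t
  have ht : Submodule.span ℂ t = ⊤ := by
    rw [← hA, Submodule.iSup_eq_span]
  let B : Basis b ℂ (Fin d → ℂ) := Basis.mk hli (by
    rw [Subtype.range_coe_subtype, Set.ofPred_mem_eq, hspan, ht])
  let B' : Basis (Fin d) ℂ (Fin d → ℂ) := B.reindex (B.indexEquiv (Pi.basisFun ℂ (Fin d)))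
  have hB' : ∀ i, ∃ a : ℂ, toLin' A (B' i) = a • B' i := by
    intro i
    have h1 : B' i ∈ t := by
      simp only [B', B, Basis.reindex_apply, Basis.mk_apply]
      exact hbt (Subtype.property _)
    obtain ⟨a, ha⟩ := Set.mem_iUnion.1 h1
    exact ⟨a, End.mem_eigenspace_iff.1 ha⟩
  choose a ha using hB'
  have hev : ∀ i, End.HasEigenvalue (toLin' A) (a i) := fun i =>
    hasEigenvalue_of_apply (B'.ne_zero i) (ha i)
  have hre : ∀ i, (((a i).re : ℝ) : ℂ) = a i := fun i =>
    Complex.ext (by simp) (by simp [hreal _ (hev i)])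
  refine ⟨(Pi.basisFun ℂ (Fin d)).toMatrix B', fun i => (a i).re, ?_, fun i => ?_, ?_⟩
  · have := (Pi.basisFun ℂ (Fin d)).invertibleToMatrix B'
    exact isUnit_of_invertible _
  · rw [hre]
    exact hev i
  · ext i j
    have h1 := congr($(ha j) i)
    simp only [toLin'_apply, mulVec, dotProduct, Pi.smul_apply, smul_eq_mul] at h1
    rw [mul_diagonal, mul_apply, hre, mul_comm]
    simpa [Basis.toMatrix_apply] using h1

section Averaging

theorem selfAdjoint_mul_of_commute {n : Type*} [Fintype n] {H J s B : Matrix n n ℂ}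
    (hHJ : H * J = Jᴴ * H) (hHs : H * s = s * H) (hs : sᴴ = s) (hJs : J * s = s * J) (hB : J * s = B) :
    H * B = Bᴴ * H := by
  rw [← hB, ← mul_assoc, hHJ, mul_assoc, hHs, ← mul_assoc]
  congr 1
  rw [hJs, conjTranspose_mul, hs]

variable {n : Type*} [DecidableEq n]

/-- The diagonal matrix with entries `h (α i)`, that is, the function `h` applied to the diagonal
matrix with entries `α i`. -/
noncomputable def diagFun (α : n → ℝ) (h : ℝ → ℝ) : Matrix n n ℂ :=
  diagonal fun i => (h (α i) : ℂ)

theorem conjTranspose_diagFun (α : n → ℝ) (h : ℝ → ℝ) : (diagFun α h)ᴴ = diagFun α h := by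
  simp only [diagFun, diagonal_conjTranspose]
  congr 1
  ext i
  simp

theorem diagFun_congr {α : n → ℝ} {h k : ℝ → ℝ} (hhk : ∀ i, h (α i) = k (α i)) :
    diagFun α h = diagFun α k := by
  simp [diagFun, hhk]

variable [Fintype n]

theorem diagFun_mul (α : n → ℝ) (h k : ℝ → ℝ) :
    diagFun α h * diagFun α k = diagFun α fun a => h a * k a := by
  simp [diagFun]

/-- The reflection `a ↦ -a`, modified to fix `1` and `-1`. -/
noncomputable def cutNeg (a : ℝ) : ℝ := if a ^ 2 = 1 then a else -a

theorem cutNeg_cutNeg (a : ℝ) : cutNeg (cutNeg a) = a := by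
  by_cases h : a ^ 2 = 1
  · simp only [cutNeg, if_pos h]
  · have h' : (-a) ^ 2 ≠ 1 := by rwa [neg_sq]
    simp only [cutNeg, if_neg h, if_neg h', neg_neg]

theorem cutNeg_sq (a : ℝ) : cutNeg a ^ 2 = a ^ 2 := by
  unfold cutNeg
  split_ifs <;> simp

theorem AnticommutingPair.apply_eq_zero {α : n → ℝ} {A B : Matrix n n ℂ}
    (hA : A = diagonal fun i => (α i : ℂ)) (h : AnticommutingPair A B) {i j : n}
    (hij : α j ≠ -α i) : B i j = 0 := by
  have h1 := congr($(h.anti) i j)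
  rw [hA, mul_diagonal, neg_apply, diagonal_mul] at h1
  have h2 : (α j + α i : ℂ) * B i j = 0 := by linear_combination h1
  refine (mul_eq_zero.1 h2).resolve_left fun h0 => hij ?_
  exact eq_neg_of_add_eq_zero_left (by exact_mod_cast h0)

/-- The polar part of the second member of an anticommuting pair, extended by the identity
on the kernel. -/
theorem AnticommutingPair.exists_involution {α : n → ℝ} {A B : Matrix n n ℂ}
    (hA : A = diagonal fun i => (α i : ℂ)) (h : AnticommutingPair A B)
    (hα : ∀ i, -1 < α i ∧ α i ≤ 1) :
    ∃ J : Matrix n n ℂ, J * J = 1 ∧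
      (∀ f, J * diagFun α f = diagFun α (fun a => f (cutNeg a)) * J) ∧
      J * diagFun α (fun a => √(1 - a ^ 2)) = B ∧
      J * diagFun α (Pi.single 1 1) = diagFun α (Pi.single 1 1) := by
  have hne : ∀ i, α i ≠ -1 := fun i hi => by linarith [(hα i).1]
  have hBzero : ∀ i j, α j ≠ cutNeg (α i) ∨ (α i) ^ 2 = 1 ∨ (α j) ^ 2 = 1 → B i j = 0 := by
    intro i j hij
    refine h.apply_eq_zero hA fun h0 => ?_
    have h1 : α i ^ 2 ≠ 1 := fun h1 => by
      rcases sq_eq_one_iff.1 h1 with h2 | h2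
      · exact hne j (by rw [h0, h2])
      · exact hne i h2
    rcases hij with hij | hij | hij
    · exact hij (by rw [cutNeg, if_neg h1, h0])
    · exact h1 hij
    · exact h1 (by rw [← hij, h0, neg_sq])
  have hcomm : ∀ f, B * diagFun α f = diagFun α (fun a => f (cutNeg a)) * B := by
    intro f
    ext i j
    simp only [diagFun, mul_diagonal, diagonal_mul]
    by_cases hij : α j = cutNeg (α i)
    · rw [hij, mul_comm]
    · rw [hBzero i j (Or.inl hij), mul_zero, zero_mul]
  have hsq : ∀ i, √(1 - α i ^ 2) ^ 2 = 1 - α i ^ 2 := fun i =>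
    Real.sq_sqrt (by nlinarith [(hα i).1, (hα i).2])
  have hBf : ∀ f : ℝ → ℝ, (∀ i, (α i) ^ 2 ≠ 1 → f (α i) = 0) → B * diagFun α f = 0 := by
    intro f hf
    ext i j
    simp only [diagFun, mul_diagonal, Matrix.zero_apply]
    by_cases hj : (α j) ^ 2 = 1
    · rw [hBzero i j (Or.inr (Or.inr hj)), zero_mul]
    · rw [hf j hj, Complex.ofReal_zero, mul_zero]
  have hfB : ∀ f : ℝ → ℝ, (∀ i, (α i) ^ 2 ≠ 1 → f (α i) = 0) → diagFun α f * B = 0 := by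
    intro f hf
    ext i j
    simp only [diagFun, diagonal_mul, Matrix.zero_apply]
    by_cases hi : (α i) ^ 2 = 1
    · rw [hBzero i j (Or.inr (Or.inl hi)), mul_zero]
    · rw [hf i hi, Complex.ofReal_zero, zero_mul]
  have hsingle : ∀ a : ℝ, a ^ 2 ≠ 1 → (Pi.single 1 1 : ℝ → ℝ) a = 0 := fun a ha =>
    Pi.single_eq_of_ne (fun h1 => ha (by rw [h1, one_pow])) _
  have hone : ∀ i, α i ^ 2 = 1 → α i = 1 := fun i hi =>
    (sq_eq_one_iff.1 hi).resolve_right (hne i)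
  set r : Matrix n n ℂ := diagFun α fun a => (√(1 - a ^ 2))⁻¹ with hr
  set g : Matrix n n ℂ := diagFun α (Pi.single 1 1) with hg
  have hBr : B * r = r * B := by
    rw [hr, hcomm]
    simp only [cutNeg_sq]
  have hgB : g * B = 0 := hfB _ fun i hi => hsingle _ hi
  have hBrg : B * r * g = 0 := by
    rw [mul_assoc, diagFun_mul]
    exact hBf _ fun i hi => by rw [hsingle _ hi, mul_zero]
  have hgg : g * g = g := by
    rw [hg, diagFun_mul]
    refine diagFun_congr fun i => ?_
    by_cases hi : α i = 1 <;> simp [hi]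
  have hB2 : B * B = diagFun α fun a => 1 - a ^ 2 := by
    rw [h.sq, hA, diagFun, ← diagonal_one, diagonal_mul_diagonal, diagonal_sub]
    congr 1
    ext i
    push_cast
    ring
  refine ⟨B * r + g, ?_, fun f => ?_, ?_, ?_⟩
  · have e1 : B * r * (B * r) = B * B * (r * r) := by
      rw [mul_assoc, ← mul_assoc r, ← hBr]
      simp only [mul_assoc]
    rw [add_mul, mul_add, mul_add, hBrg, hgg, ← mul_assoc g, hgB, zero_mul, add_zero, zero_add, e1,
      hB2, hr, diagFun_mul, diagFun_mul, hg, diagFun, diagFun, diagonal_add, ← diagonal_one]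
    congr 1
    ext i
    by_cases hi : α i ^ 2 = 1
    · simp [hone i hi]
    · have h0 : 1 - α i ^ 2 ≠ 0 := fun h0 => hi (by linarith)
      rw [hsingle _ hi, ← mul_inv, ← pow_two, hsq, mul_inv_cancel₀ h0]
      simp
  · have e1 : r * diagFun α f = diagFun α f * r := by
      rw [hr, diagFun_mul, diagFun_mul]
      simp only [mul_comm]
    have e2 : g * diagFun α f = diagFun α (fun a => f (cutNeg a)) * g := by
      rw [hg, diagFun_mul, diagFun_mul]
      refine diagFun_congr fun i => ?_
      by_cases hi : α i = 1
      · simp [hi, cutNeg]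
      · simp [hi]
    rw [add_mul, mul_add, e2, mul_assoc, e1, ← mul_assoc, hcomm, mul_assoc]
  · have e1 : g * diagFun α (fun a => √(1 - a ^ 2)) = 0 := by
      rw [hg, diagFun_mul, diagFun, ← diagonal_zero]
      congr 1
      ext i
      by_cases hi : α i = 1 <;> simp [hi]
    have e2 : B * (1 - diagFun α fun a => (√(1 - a ^ 2))⁻¹ * √(1 - a ^ 2)) = 0 := by
      have : (1 - diagFun α fun a => (√(1 - a ^ 2))⁻¹ * √(1 - a ^ 2))
          = diagFun α fun a => 1 - (√(1 - a ^ 2))⁻¹ * √(1 - a ^ 2) := by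
        rw [diagFun, diagFun, ← diagonal_one, diagonal_sub]
        simp
      rw [this]
      refine hBf _ fun i hi => ?_
      have h0 : √(1 - α i ^ 2) ≠ 0 := fun h0 => hi (by
        have := hsq i
        rw [h0] at this
        linarith)
      rw [inv_mul_cancel₀ h0, sub_self]
    rw [add_mul, e1, add_zero, mul_assoc, hr, diagFun_mul]
    rw [mul_sub, mul_one, sub_eq_zero] at e2
    exact e2.symm
  · rw [add_mul, hBrg, hgg, zero_add]

/-- Invertible matrices permuting the eigenspaces of a diagonal matrix have a power that
commutes with every function of that matrix. -/
theorem exists_pow_commute {α : n → ℝ} {T T' : Matrix n n ℂ} (hT : T * T' = 1) {π : ℝ → ℝ}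
    (hπ : Function.Injective π)
    (h : ∀ f, T * diagFun α f = diagFun α (fun a => f (π a)) * T) :
    ∃ N, 0 < N ∧ ∀ f, T ^ N * diagFun α f = diagFun α f * T ^ N := by
  have hmaps : Set.MapsTo π (Set.range α) (Set.range α) := by
    rintro _ ⟨i, rfl⟩
    by_contra hcon
    have hrow : ∀ j, T i j = 0 := by
      intro j
      have h1 := congr($(h (Pi.single (π (α i)) 1)) i j)
      simp only [diagFun, mul_diagonal, diagonal_mul] at h1
      rw [Pi.single_eq_same, Pi.single_eq_of_ne fun h0 => hcon ⟨j, h0⟩] at h1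
      simpa using h1.symm
    have h2 := congr($hT i i)
    simp [mul_apply, hrow] at h2
  have hfin : Finite (Set.range α) := Set.finite_range α
  have hbij : Function.Bijective (hmaps.restrict) :=
    Finite.injective_iff_bijective.1 (hmaps.restrict_inj.2 hπ.injOn)
  let e : Equiv.Perm (Set.range α) := Equiv.ofBijective _ hbij
  have hpow : ∀ (k : ℕ) (x : Set.range α), ((e ^ k) x : ℝ) = π^[k] x := by
    intro k
    induction k with
    | zero => simp
    | succ k ih =>
      intro x
      rw [pow_succ, Equiv.Perm.mul_apply, ih, Function.iterate_succ_apply]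
      rfl
  have hTpow : ∀ (k : ℕ) f, T ^ k * diagFun α f = diagFun α (fun a => f (π^[k] a)) * T ^ k := by
    intro k
    induction k with
    | zero => simp
    | succ k ih =>
      intro f
      rw [pow_succ, mul_assoc, h, ← mul_assoc, ih, mul_assoc, ← pow_succ]
      simp only [Function.iterate_succ_apply']
  refine ⟨orderOf e, orderOf_pos e, fun f => ?_⟩
  rw [hTpow]
  congr 1
  refine diagFun_congr fun i => ?_
  have h3 := hpow (orderOf e) ⟨α i, i, rfl⟩
  rw [pow_orderOf_eq_one] at h3
  rw [← h3]
  rfl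

/-- If an involution `J` inverts `T` and fixes a spectral subspace preserved by `T ^ N`, then
`T ^ (2 * N)` is the identity there. -/
theorem pow_two_mul_eq_self {R : Type*} [Monoid R] {J T T' E : R} {N : ℕ}
    (hTT' : T * T' = 1) (hJT : J * T = T' * J) (hJE : J * E = E)
    (hcomm : T ^ N * E = E * T ^ N) : T ^ (N + N) * E = E := by
  have h1 : T ^ N * T' ^ N = 1 := pow_mul_pow_eq_one N hTT'
  have h2 : J * T ^ N = T' ^ N * J := SemiconjBy.pow_right hJT N
  have h3 : T ^ N * E = T' ^ N * E := by
    calc T ^ N * E = J * E * T ^ N := by rw [hcomm, hJE]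
      _ = J * T ^ N * E := by rw [mul_assoc, ← hcomm, mul_assoc]
      _ = T' ^ N * E := by rw [h2, mul_assoc, hJE]
  rw [pow_add, mul_assoc, h3, ← mul_assoc, h1, one_mul]

/-- Fixed vectors of a power of `T` are preserved by an involution inverting `T`. -/
theorem pow_mul_eq_self_of_involution {R : Type*} [Monoid R] {J T T' E F : R} {M : ℕ}
    (hJ : J * J = 1) (hT'T : T' * T = 1) (hJT : J * T = T' * J) (hE : J * E = F * J)
    (hF : T ^ M * F = F) : T ^ M * E = E := by
  have h1 : T' ^ M * T ^ M = 1 := pow_mul_pow_eq_one M hT'T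
  have h2 : J * T ^ M = T' ^ M * J := SemiconjBy.pow_right hJT M
  have h3 : T' ^ M * F = F := by
    rw [← hF, ← mul_assoc, h1, one_mul, hF]
  calc T ^ M * E = J * (J * T ^ M) * E := by rw [← mul_assoc, hJ, one_mul]
    _ = J * (T' ^ M * F) * J := by rw [h2, mul_assoc, mul_assoc, hE]; simp only [mul_assoc]
    _ = J * J * E := by rw [h3, mul_assoc, mul_assoc, hE]
    _ = E := by rw [hJ, one_mul]

/-- The group generated by two involutions whose product has finite order is conjugate to a
group of unitary matrices; the invariant form commutes with everything normalized by it. -/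
theorem exists_invariant_posDef {J J' : Matrix n n ℂ} (hJ : J * J = 1) (hJ' : J' * J' = 1)
    {M : ℕ} (hM : 0 < M) (hT : (J' * J) ^ M = 1) {α : n → ℝ}
    (hJα : ∀ f, ∃ g, J * diagFun α f = diagFun α g * J)
    (hJα' : ∀ f, ∃ g, J' * diagFun α f = diagFun α g * J') :
    ∃ H : Matrix n n ℂ, H.PosDef ∧ H * J = Jᴴ * H ∧ H * J' = J'ᴴ * H ∧
      ∀ f, H * diagFun α f = diagFun α f * H := by
  set T := J' * J with hTdef
  have hTT' : T * (J * J') = 1 := by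
    rw [hTdef, mul_assoc, ← mul_assoc J J, hJ, one_mul, hJ']
  have hTα : ∀ (k : ℕ) f, ∃ g, T ^ k * diagFun α f = diagFun α g * T ^ k := by
    intro k
    induction k with
    | zero => exact fun f => ⟨f, by simp⟩
    | succ k ih =>
      intro f
      obtain ⟨g, hg⟩ := hJα f
      obtain ⟨g', hg'⟩ := hJα' g
      obtain ⟨g'', hg''⟩ := ih g'
      refine ⟨g'', ?_⟩
      rw [pow_succ, mul_assoc, hTdef, mul_assoc J', hg, ← mul_assoc J', hg', mul_assoc _ J',
        ← mul_assoc, ← hTdef, hg'', mul_assoc]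
  have hgram : ∀ {X : Matrix n n ℂ} {f : ℝ → ℝ}, (∃ g, X * diagFun α f = diagFun α g * X) →
      Xᴴ * X * diagFun α f = diagFun α f * (Xᴴ * X) := by
    rintro X f ⟨g, hg⟩
    have hg' := congr($hgᴴ)
    rw [conjTranspose_mul, conjTranspose_mul, conjTranspose_diagFun, conjTranspose_diagFun] at hg'
    rw [mul_assoc, hg, ← mul_assoc, ← hg', mul_assoc]
  let K : Matrix n n ℂ := ∑ k ∈ Finset.range M, (T ^ k)ᴴ * T ^ k
  have hK : K.PosDef := by
    obtain ⟨m, rfl⟩ := Nat.exists_eq_succ_of_ne_zero hM.ne'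
    simp only [K]
    rw [Finset.sum_range_succ', add_comm]
    refine PosDef.add_posSemidef ?_ (posSemidef_sum _ fun k _ =>
      posSemidef_conjTranspose_mul_self _)
    simpa using PosDef.one
  have hTK : Tᴴ * K * T = K := by
    have h1 := Finset.sum_range_succ (fun k => (T ^ k)ᴴ * T ^ k) M
    rw [Finset.sum_range_succ', hT, pow_zero] at h1
    have h2 := add_right_cancel h1
    simp only [K]
    conv_rhs => rw [← h2]
    rw [Finset.mul_sum, Finset.sum_mul]
    refine Finset.sum_congr rfl fun k _ => ?_
    rw [pow_succ, conjTranspose_mul (T ^ k) T]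
    simp only [mul_assoc]
  have hTK' : (J * J')ᴴ * K * (J * J') = K := by
    calc (J * J')ᴴ * K * (J * J') = (J * J')ᴴ * (Tᴴ * K * T) * (J * J') := by rw [hTK]
      _ = (T * (J * J'))ᴴ * K * (T * (J * J')) := by
        rw [conjTranspose_mul T]
        simp only [mul_assoc]
      _ = K := by rw [hTT', conjTranspose_one, one_mul, mul_one]
  have hKα : ∀ f, K * diagFun α f = diagFun α f * K := fun f => by
    simp only [K]
    rw [Finset.sum_mul, Finset.mul_sum]
    exact Finset.sum_congr rfl fun k _ => hgram (hTα k f)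
  have hKJα : ∀ f, Jᴴ * K * J * diagFun α f = diagFun α f * (Jᴴ * K * J) := by
    intro f
    obtain ⟨g, hg⟩ := hJα f
    have hg' := congr($hgᴴ)
    rw [conjTranspose_mul, conjTranspose_mul, conjTranspose_diagFun, conjTranspose_diagFun] at hg'
    rw [mul_assoc, hg, ← mul_assoc, mul_assoc Jᴴ, hKα, ← mul_assoc, ← hg']
    simp only [mul_assoc]
  have hJJ : Jᴴ * Jᴴ = 1 := by rw [← conjTranspose_mul, hJ, conjTranspose_one]
  have hJJ' : J'ᴴ * J'ᴴ = 1 := by rw [← conjTranspose_mul, hJ', conjTranspose_one]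
  have hselfJ : (K + Jᴴ * K * J) * J = Jᴴ * (K + Jᴴ * K * J) := by
    rw [add_mul, mul_add, mul_assoc _ J J, hJ, ← mul_assoc Jᴴ, ← mul_assoc Jᴴ, hJJ]
    rw [mul_one, one_mul, add_comm]
  refine ⟨K + Jᴴ * K * J, ?_, hselfJ, ?_, fun f => by rw [add_mul, mul_add, hKα, hKJα]⟩
  · refine hK.add_posSemidef ?_
    exact hK.posSemidef.conjTranspose_mul_mul_same J
  · have e1 : K * J' = J'ᴴ * (Jᴴ * K * J) := by
      calc K * J' = (J * J')ᴴ * K * (J * J') * J' := by rw [hTK']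
        _ = J'ᴴ * Jᴴ * K * J * (J' * J') := by rw [conjTranspose_mul]; simp only [mul_assoc]
        _ = J'ᴴ * (Jᴴ * K * J) := by rw [hJ', mul_one]; simp only [mul_assoc]
    have e2 : Jᴴ * K * J * J' = J'ᴴ * K := by
      calc Jᴴ * K * J * J' = J'ᴴ * J'ᴴ * Jᴴ * K * J * J' := by rw [hJJ', one_mul]
        _ = J'ᴴ * ((J * J')ᴴ * K * (J * J')) := by rw [conjTranspose_mul]; simp only [mul_assoc]
        _ = J'ᴴ * K := by rw [hTK']
    rw [add_mul, mul_add, e1, e2, add_comm]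

theorem exists_posDef_of_diagonal {α : n → ℝ} {μ : ℝ} (hμ : 0 < μ)
    (hα : ∀ i, μ - 1 ≤ α i ∧ α i ≤ 1) {A B C D : Matrix n n ℂ}
    (hA : A = diagonal fun i => (α i : ℂ)) (hAC : A + C = (μ : ℂ) • 1)
    (hAB : AnticommutingPair A B) (hCD : AnticommutingPair C D) :
    ∃ H : Matrix n n ℂ, H.PosDef ∧ H * A = Aᴴ * H ∧ H * B = Bᴴ * H ∧ H * D = Dᴴ * H := by
  have hC : C = diagonal fun i => ((μ - α i : ℝ) : ℂ) := by
    rw [← add_right_inj A, hAC, hA, diagonal_add, smul_one_eq_diagonal]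
    congr 1
    ext i
    push_cast
    ring
  obtain ⟨J, hJ, hJα, hJB, hJ1⟩ := hAB.exists_involution hA
    fun i => ⟨by linarith [(hα i).1], (hα i).2⟩
  obtain ⟨J', hJ', hJα', hJD, hJ1'⟩ := hCD.exists_involution hC
    fun i => ⟨by linarith [(hα i).2], by linarith [(hα i).1]⟩
  have hshift : ∀ f : ℝ → ℝ, diagFun α f = diagFun (fun i => μ - α i) fun a => f (μ - a) :=
    fun f => by simp [diagFun]
  have hunshift : ∀ f : ℝ → ℝ, diagFun (fun i => μ - α i) f = diagFun α fun a => f (μ - a) :=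
    fun f => by simp [diagFun]
  have hcomm' : ∀ f, J' * diagFun α f = diagFun α (fun a => f (μ - cutNeg (μ - a))) * J' := by
    intro f
    rw [hshift, hJα', hunshift]
  have hsingle : ∀ b, diagFun (fun i => μ - α i) (Pi.single b 1) =
      diagFun α (Pi.single (μ - b) 1) := by
    intro b
    rw [hunshift]
    refine diagFun_congr fun i => ?_
    simp only [Pi.single_apply]
    congr 1
    exact propext ⟨fun h => by linarith, fun h => by linarith⟩
  rw [hsingle] at hJ1'
  have hTT' : J' * J * (J * J') = 1 := by
    rw [mul_assoc, ← mul_assoc J J, hJ, one_mul, hJ']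
  have hT'T : J * J' * (J' * J) = 1 := mul_eq_one_comm.1 hTT'
  have hJT : J * (J' * J) = J * J' * J := (mul_assoc _ _ _).symm
  have hJT' : J' * (J' * J) = J * J' * J' := by
    rw [← mul_assoc, hJ', mul_assoc, hJ', one_mul, mul_one]
  have hinj : Function.Injective cutNeg := Function.LeftInverse.injective cutNeg_cutNeg
  obtain ⟨N, hN, hcommN⟩ := exists_pow_commute hTT'
    (π := fun a => cutNeg (μ - cutNeg (μ - a)))
    (fun a b hab => by
      have h1 := hinj (sub_right_injective (hinj hab))
      linarith)
    (fun f => by rw [mul_assoc, hJα, ← mul_assoc, hcomm', mul_assoc])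
  have hE : ∀ b, J * diagFun α (Pi.single b 1) = diagFun α (Pi.single (cutNeg b) 1) * J := by
    intro b
    rw [hJα]
    congr 1
    refine diagFun_congr fun i => ?_
    simp only [Pi.single_apply]
    congr 1
    exact propext ⟨fun h => by rw [← h, cutNeg_cutNeg], fun h => by rw [h, cutNeg_cutNeg]⟩
  have hE' : ∀ b, J' * diagFun α (Pi.single b 1) =
      diagFun α (Pi.single (μ - cutNeg (μ - b)) 1) * J' := by
    intro b
    rw [hcomm']
    congr 1
    refine diagFun_congr fun i => ?_
    simp only [Pi.single_apply]
    congr 1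
    refine propext ⟨fun h => ?_, fun h => ?_⟩
    · rw [← h, sub_sub_cancel, cutNeg_cutNeg, sub_sub_cancel]
    · rw [h, sub_sub_cancel, cutNeg_cutNeg, sub_sub_cancel]
  have hfix : ∀ b, (J' * J) ^ (N + N) * diagFun α (Pi.single b 1) = diagFun α (Pi.single b 1) := by
    intro b
    by_contra hb
    have hmem : ∀ b, ¬ (J' * J) ^ (N + N) * diagFun α (Pi.single b 1) =
        diagFun α (Pi.single b 1) → b ∈ Set.range α := by
      intro b hb
      by_contra hcon
      refine hb ?_
      have : diagFun α (Pi.single b 1) = 0 := by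
        rw [diagFun, ← diagonal_zero]
        congr 1
        ext i
        rw [Pi.single_eq_of_ne fun h => hcon ⟨i, h⟩, Complex.ofReal_zero]
      rw [this, mul_zero]
    refine not_of_translate (Set.finite_range α) (c := 2 * μ) (by positivity)
      (p := fun b => ¬ (J' * J) ^ (N + N) * diagFun α (Pi.single b 1) =
        diagFun α (Pi.single b 1)) hmem (fun b hb => ?_) b hb
    have hb1 : b ^ 2 ≠ 1 := by
      intro h
      rcases sq_eq_one_iff.1 h with rfl | rfl
      · exact hb (pow_two_mul_eq_self hTT' hJT hJ1 (hcommN _))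
      · obtain ⟨i, hi⟩ := hmem _ hb
        linarith [(hα i).1]
    have hb2 : ¬ (J' * J) ^ (N + N) * diagFun α (Pi.single (-b) 1) =
        diagFun α (Pi.single (-b) 1) := fun h =>
      hb (pow_mul_eq_self_of_involution hJ hT'T hJT (by rw [hE, cutNeg, if_neg hb1]) h)
    have hb3 : (μ + b) ^ 2 ≠ 1 := by
      intro h
      rcases sq_eq_one_iff.1 h with h | h
      · obtain rfl : b = 1 - μ := by linarith
        refine hb2 (pow_two_mul_eq_self hTT' hJT' ?_ (hcommN _))
        rw [neg_sub]
        exact hJ1'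
      · obtain ⟨i, hi⟩ := hmem _ hb2
        linarith [(hα i).2]
    refine fun h => hb2 (pow_mul_eq_self_of_involution hJ' hT'T hJT' (hE' _) ?_)
    rw [sub_neg_eq_add, cutNeg, if_neg hb3]
    rwa [show μ - -(μ + b) = b + 2 * μ by ring]
  have hone : (J' * J) ^ (N + N) = 1 := by
    ext i j
    have h := congr($(hfix (α j)) i j)
    simp only [diagFun, mul_diagonal, Pi.single_eq_same, Complex.ofReal_one, mul_one] at h
    rw [h, diagonal_apply, one_apply]
    split_ifs with hij
    · rw [hij, Pi.single_eq_same, Complex.ofReal_one]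
    · rfl
  obtain ⟨H, hH, hHJ, hHJ', hHα⟩ := exists_invariant_posDef hJ hJ' (by omega) hone
    (fun f => ⟨_, hJα f⟩) (fun f => ⟨_, hcomm' f⟩)
  refine ⟨H, hH, ?_, ?_, ?_⟩
  · have hAα : A = diagFun α id := by rw [hA]; rfl
    rw [hAα, conjTranspose_diagFun, hHα]
  · refine selfAdjoint_mul_of_commute hHJ (hHα _) (conjTranspose_diagFun _ _) ?_ hJB
    rw [hJα]
    simp only [cutNeg_sq]
  · refine selfAdjoint_mul_of_commute hHJ' ?_ (conjTranspose_diagFun _ _) ?_ hJD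
    · rw [hunshift, hHα]
    · rw [hJα']
      simp only [cutNeg_sq]

end Averaging

/-- A matrix that is selfadjoint for a positive definite form becomes Hermitian in an orthonormal
basis of that form. -/
theorem isHermitian_conj {n : Type*} [Fintype n] [DecidableEq n] {R X : Matrix n n ℂ}
    (hR : IsUnit R) (h : Rᴴ * R * X = Xᴴ * (Rᴴ * R)) : (R * X * R⁻¹).IsHermitian := by
  have hdet := (isUnit_iff_isUnit_det R).1 hR
  have hdet' : IsUnit Rᴴ.det := (isUnit_iff_isUnit_det _).1 hR.star
  rw [IsHermitian, conjTranspose_mul, conjTranspose_mul, conjTranspose_nonsing_inv]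
  calc Rᴴ⁻¹ * (Xᴴ * Rᴴ) = Rᴴ⁻¹ * (Xᴴ * (Rᴴ * R)) * R⁻¹ := by
        rw [mul_assoc, mul_assoc, mul_assoc, mul_nonsing_inv _ hdet, mul_one]
    _ = R * X * R⁻¹ := by
        rw [← h, ← mul_assoc, ← mul_assoc, nonsing_inv_mul _ hdet', one_mul]

theorem exists_trace_eq_natCast {n : Type*} [Fintype n] [DecidableEq n] {Q : Matrix n n ℂ}
    (hQ : Q * Q = Q) : ∃ r : ℕ, Q.trace = r := by
  have h : IsIdempotentElem (toLin' Q) := by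
    rw [IsIdempotentElem, End.mul_eq_comp, ← toLin'_mul, hQ]
  exact ⟨_, by rw [← trace_toLin'_eq, (LinearMap.IsIdempotentElem.isProj_range _ h).trace]⟩

theorem AnticommutingPair.map {R S F : Type*} [Ring R] [Ring S] [FunLike F R S]
    [RingHomClass F R S] (f : F) {A B : R} (h : AnticommutingPair A B) :
    AnticommutingPair (f A) (f B) where
  anti := by rw [← map_mul, h.anti, map_neg, map_mul]
  sq := by rw [← map_mul, h.sq, map_sub, map_one, map_mul]

theorem exists_isHermitian_of_pairs {d : ℕ} {A B C D : Matrix (Fin d) (Fin d) ℂ} {μ : ℝ}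
    (hμ : 0 < μ) (hAC : A + C = (μ : ℂ) • 1)
    (hAB : AnticommutingPair A B) (hCD : AnticommutingPair C D) :
    ∃ S : Matrix (Fin d) (Fin d) ℂ, IsUnit S ∧ (S⁻¹ * A * S).IsHermitian ∧
      (S⁻¹ * B * S).IsHermitian ∧ (S⁻¹ * C * S).IsHermitian ∧ (S⁻¹ * D * S).IsHermitian := by
  have hAB' := hAB.map (toLinAlgEquiv' (R := ℂ) (n := Fin d))
  have hCD' := hCD.map (toLinAlgEquiv' (R := ℂ) (n := Fin d))
  have hAC' : toLinAlgEquiv' A + toLinAlgEquiv' C = (μ : ℂ) • (1 : End ℂ (Fin d → ℂ)) := by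
    rw [← map_add, hAC, map_smul, map_one]
  obtain ⟨P, α, hP, hev, hAP⟩ := exists_diagonalization A
    (iSup_eigenspace_eq_top_of_no_jordan (no_jordan hAB' hCD' hμ hAC'))
    fun a ha => (im_eq_zero_and_re_le_one hAB' hCD' hμ hAC' ha).1
  have hdet := (isUnit_iff_isUnit_det P).1 hP
  have hconj : ∀ X Y : Matrix (Fin d) (Fin d) ℂ,
      P⁻¹ * (X * Y) * P = P⁻¹ * X * P * (P⁻¹ * Y * P) := by
    intro X Y
    rw [mul_assoc (P⁻¹ * X), ← mul_assoc P, ← mul_assoc P, mul_nonsing_inv _ hdet, one_mul]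
    simp only [mul_assoc]
  have hpair : ∀ {X Y : Matrix (Fin d) (Fin d) ℂ}, AnticommutingPair X Y →
      AnticommutingPair (P⁻¹ * X * P) (P⁻¹ * Y * P) := by
    intro X Y h
    refine ⟨?_, ?_⟩
    · rw [← hconj, h.anti, mul_neg, neg_mul, hconj]
    · rw [← hconj, h.sq, mul_sub, sub_mul, hconj, mul_one, nonsing_inv_mul _ hdet]
  obtain ⟨H, hH, hHA, hHB, hHD⟩ := exists_posDef_of_diagonal (A := P⁻¹ * A * P) (B := P⁻¹ * B * P)
    (C := P⁻¹ * C * P) (D := P⁻¹ * D * P) (α := α) hμ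
    (fun i => ⟨by simpa using sub_one_le_re hAB' hCD' hμ hAC' (hev i),
      by simpa using (im_eq_zero_and_re_le_one hAB' hCD' hμ hAC' (hev i)).2⟩)
    (by rw [mul_assoc, hAP, ← mul_assoc, nonsing_inv_mul _ hdet, one_mul])
    (by rw [← add_mul, ← mul_add, hAC, Matrix.mul_smul, Matrix.smul_mul, mul_one,
      nonsing_inv_mul _ hdet])
    (hpair hAB) (hpair hCD)
  obtain ⟨R, hR, rfl⟩ := CStarAlgebra.isStrictlyPositive_iff_eq_star_mul_self.1
    hH.isStrictlyPositive
  have hRdet := (isUnit_iff_isUnit_det R).1 hR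
  have hS : ∀ X, (P * R⁻¹)⁻¹ * X * (P * R⁻¹) = R * (P⁻¹ * X * P) * R⁻¹ := by
    intro X
    rw [Matrix.mul_inv_rev, nonsing_inv_nonsing_inv _ hRdet]
    simp only [mul_assoc]
  have hherm : ∀ X, star R * R * (P⁻¹ * X * P) = (P⁻¹ * X * P)ᴴ * (star R * R) →
      ((P * R⁻¹)⁻¹ * X * (P * R⁻¹)).IsHermitian := by
    intro X hX
    rw [hS]
    exact isHermitian_conj hR hX
  have hunit : IsUnit (P * R⁻¹) := hP.mul ((isUnit_nonsing_inv_iff).2 hR)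
  have hA := hherm A hHA
  refine ⟨P * R⁻¹, hunit, hA, hherm B hHB, ?_, hherm D hHD⟩
  have hC : (P * R⁻¹)⁻¹ * C * (P * R⁻¹) = (μ : ℂ) • 1 - (P * R⁻¹)⁻¹ * A * (P * R⁻¹) := by
    rw [eq_sub_iff_add_eq', ← add_mul, ← mul_add, hAC, Matrix.mul_smul, Matrix.smul_mul, mul_one,
      nonsing_inv_mul _ ((isUnit_iff_isUnit_det _).1 hunit)]
  rw [hC]
  refine IsHermitian.sub ?_ hA
  rw [IsHermitian, conjTranspose_smul, conjTranspose_one]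
  simp

/-- The case of a sum larger than two. -/
theorem exists_isHermitian_of_pos {d : ℕ} {μ : ℝ} (hμ : 0 < μ)
    (Q : Fin 4 → Matrix (Fin d) (Fin d) ℂ) (hidem : ∀ k, Q k * Q k = Q k)
    (hsum : ∑ k, Q k = ((2 + μ : ℝ) : ℂ) • (1 : Matrix (Fin d) (Fin d) ℂ)) :
    ∃ S : Matrix (Fin d) (Fin d) ℂ, IsUnit S ∧ ∀ k, (S⁻¹ * Q k * S).IsHermitian := by
  have hAC : (Q 0 + Q 1 - 1) + (Q 2 + Q 3 - 1) = (μ : ℂ) • 1 := by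
    rw [Fin.sum_univ_four] at hsum
    have h2 : ((2 + μ : ℝ) : ℂ) • (1 : Matrix (Fin d) (Fin d) ℂ) = 1 + 1 + (μ : ℂ) • 1 := by
      push_cast
      module
    rw [h2] at hsum
    rw [show (Q 0 + Q 1 - 1) + (Q 2 + Q 3 - 1) = Q 0 + Q 1 + Q 2 + Q 3 - (1 + 1) by abel, hsum]
    abel
  obtain ⟨S, hS, hA, hB, hC, hD⟩ := exists_isHermitian_of_pairs hμ hAC
    (.of_idempotents (hidem 0) (hidem 1)) (.of_idempotents (hidem 2) (hidem 3))
  have hSS : S⁻¹ * S = 1 := nonsing_inv_mul _ ((isUnit_iff_isUnit_det S).1 hS)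
  have hhalf : ∀ {X Y : Matrix (Fin d) (Fin d) ℂ}, (S⁻¹ * (X + Y - 1) * S).IsHermitian →
      (S⁻¹ * (X - Y) * S).IsHermitian →
      (S⁻¹ * X * S).IsHermitian ∧ (S⁻¹ * Y * S).IsHermitian := by
    intro X Y h1 h2
    have e1 : S⁻¹ * X * S = (1 / 2 : ℝ) •
        (S⁻¹ * (X + Y - 1) * S + S⁻¹ * (X - Y) * S + 1) := by
      simp only [mul_add, mul_sub, add_mul, sub_mul, mul_one, hSS]
      module
    have e2 : S⁻¹ * Y * S = (1 / 2 : ℝ) •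
        (S⁻¹ * (X + Y - 1) * S - S⁻¹ * (X - Y) * S + 1) := by
      simp only [mul_add, mul_sub, add_mul, sub_mul, mul_one, hSS]
      module
    rw [e1, e2]
    exact ⟨((h1.add h2).add isHermitian_one).smul (.all _),
      ((h1.sub h2).add isHermitian_one).smul (.all _)⟩
  refine ⟨S, hS, fun k => ?_⟩
  fin_cases k
  exacts [(hhalf hA hB).1, (hhalf hA hB).2, (hhalf hC hD).1, (hhalf hC hD).2]

theorem exists_real_eq_of_sum_idempotents {d : ℕ} (hd : 1 ≤ d) {lam : ℂ}
    {Q : Fin 4 → Matrix (Fin d) (Fin d) ℂ} (hidem : ∀ k, Q k * Q k = Q k)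
    (hsum : ∑ k, Q k = lam • (1 : Matrix (Fin d) (Fin d) ℂ)) : ∃ r : ℝ, lam = r := by
  choose r hr using fun k => exists_trace_eq_natCast (hidem k)
  have h := congr(trace $hsum)
  rw [trace_sum, trace_smul, trace_one, Fintype.card_fin, smul_eq_mul] at h
  simp only [hr] at h
  have hd0 : (d : ℂ) ≠ 0 := by exact_mod_cast (by omega : d ≠ 0)
  refine ⟨(∑ k, (r k : ℝ)) / d, ?_⟩
  push_cast
  rw [h, mul_div_cancel_right₀ _ hd0]

end FourIdempotents

open FourIdempotents in
/-- Four idempotent `d×d` complex matrices summing to `λ·I` with `λ ≠ 2` are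
simultaneously similar to Hermitian matrices (orthogonal projections). -/
theorem four_idempotent_matrices_similar_hermitian
    {d : ℕ} (hd : 1 ≤ d) (lam : ℂ) (hlam : lam ≠ 2)
    (Q : Fin 4 → Matrix (Fin d) (Fin d) ℂ)
    (hidem : ∀ k, Q k ^ 2 = Q k)
    (hsum : ∑ k, Q k = lam • (1 : Matrix (Fin d) (Fin d) ℂ)) :
    ∃ S : Matrix (Fin d) (Fin d) ℂ, IsUnit S ∧
      ∀ k, (S⁻¹ * Q k * S).IsHermitian := by
  simp only [pow_two] at hidem
  obtain ⟨r, rfl⟩ := exists_real_eq_of_sum_idempotents hd hidem hsum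
  have hr : r ≠ 2 := fun h => hlam (by rw [h]; norm_num)
  rcases lt_or_gt_of_ne hr with hlt | hgt
  · obtain ⟨S, hS, h⟩ := exists_isHermitian_of_pos (μ := 2 - r) (by linarith) (fun k => 1 - Q k)
      (fun k => by
        simp only [mul_sub, sub_mul, hidem, mul_one, one_mul, sub_self, sub_zero])
      (by
        rw [Finset.sum_sub_distrib, hsum, Finset.sum_const, Finset.card_univ, Fintype.card_fin]
        push_cast
        module)
    refine ⟨S, hS, fun k => ?_⟩
    have hSS : S⁻¹ * S = 1 :=
      Matrix.nonsing_inv_mul _ ((Matrix.isUnit_iff_isUnit_det S).1 hS)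
    have hk : S⁻¹ * Q k * S = 1 - S⁻¹ * (1 - Q k) * S := by
      rw [mul_sub, sub_mul, mul_one, hSS, sub_sub_cancel]
    rw [hk]
    exact Matrix.isHermitian_one.sub (h k)
  · exact exists_isHermitian_of_pos (μ := r - 2) (by linarith) Q hidem
      (by rw [hsum, add_sub_cancel])
end

section
/- Let λ ∈ ℂ and let X be the complex vector space of all functions f : ℂ → ℂ. Define linear operators q₁, q₂, q₃, q₄ on X by (q₁f)(z) = z(f(z) + f(1−z)), (q₂f)(z) = z(f(z) − f(1−z)), (q₃f)(z) = (λ/2 − z)f(z) + (1 − λ/2 + z)f(λ−1−z), (q₄f)(z) = (λ/2 − z)f(z) − (1 − λ/2 + z)f(λ−1−z). Then qᵢ² = qᵢ for i = 1,2,3,4 and q₁ + q₂ + q₃ + q₄ = λ·id_X. In particular, for every λ ∈ ℂ there exist four idempotent linear operators on a nonzero complex vector space whose sum is λ times the identity. -/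
/-- The explicit linear operators `q₁, q₂, q₃, q₄` on the space of all functions
`ℂ → ℂ` are idempotents summing to `λ·id`. In particular, for every `λ ∈ ℂ` there
exist four idempotent linear operators on a nonzero complex vector space whose sum
is `λ` times the identity. -/
theorem four_idempotent_operators_on_functions (lam : ℂ)
    (q₁ q₂ q₃ q₄ : (ℂ → ℂ) →ₗ[ℂ] (ℂ → ℂ))
    (h₁ : ∀ f z, q₁ f z = z * (f z + f (1 - z)))
    (h₂ : ∀ f z, q₂ f z = z * (f z - f (1 - z)))
    (h₃ : ∀ f z, q₃ f z = (lam / 2 - z) * f z + (1 - lam / 2 + z) * f (lam - 1 - z))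
    (h₄ : ∀ f z, q₄ f z = (lam / 2 - z) * f z - (1 - lam / 2 + z) * f (lam - 1 - z)) :
    (q₁ ∘ₗ q₁ = q₁ ∧ q₂ ∘ₗ q₂ = q₂ ∧ q₃ ∘ₗ q₃ = q₃ ∧ q₄ ∘ₗ q₄ = q₄) ∧
    q₁ + q₂ + q₃ + q₄ = lam • (LinearMap.id : (ℂ → ℂ) →ₗ[ℂ] (ℂ → ℂ)) ∧
    ∃ (X : Type) (_ : AddCommGroup X) (_ : Module ℂ X) (_ : Nontrivial X)
      (p : Fin 4 → X →ₗ[ℂ] X),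
      (∀ i, p i ∘ₗ p i = p i) ∧
      p 0 + p 1 + p 2 + p 3 = lam • (LinearMap.id : X →ₗ[ℂ] X) := by
  have idem₁ : q₁ ∘ₗ q₁ = q₁ := LinearMap.ext fun f => funext fun z => by
    simp only [LinearMap.comp_apply, h₁, sub_sub_cancel]
    ring
  have idem₂ : q₂ ∘ₗ q₂ = q₂ := LinearMap.ext fun f => funext fun z => by
    simp only [LinearMap.comp_apply, h₂, sub_sub_cancel]
    ring
  have idem₃ : q₃ ∘ₗ q₃ = q₃ := LinearMap.ext fun f => funext fun z => by
    simp only [LinearMap.comp_apply, h₃, sub_sub_cancel]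
    ring
  have idem₄ : q₄ ∘ₗ q₄ = q₄ := LinearMap.ext fun f => funext fun z => by
    simp only [LinearMap.comp_apply, h₄, sub_sub_cancel]
    ring
  have sum_eq : q₁ + q₂ + q₃ + q₄ = lam • (LinearMap.id : (ℂ → ℂ) →ₗ[ℂ] (ℂ → ℂ)) :=
    LinearMap.ext fun f => funext fun z => by
      simp only [LinearMap.add_apply, Pi.add_apply, LinearMap.smul_apply, LinearMap.id_apply,
        Pi.smul_apply, smul_eq_mul, h₁, h₂, h₃, h₄]
      ring
  refine ⟨⟨idem₁, idem₂, idem₃, idem₄⟩, sum_eq, ℂ → ℂ, inferInstance, inferInstance,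
    inferInstance, ![q₁, q₂, q₃, q₄], ?_, sum_eq⟩
  intro i
  fin_cases i
  exacts [idem₁, idem₂, idem₃, idem₄]
end

section
/- Let H be a complex Hilbert space and let S₁, S₂ be bounded linear operators on H satisfying S₁*S₁ = S₂*S₂ = I, S₁*S₂ = 0, and S₁S₁* + S₂S₂* = I. Let λ ∈ ℂ and set a = (5−2λ)/6, b = (4λ−7)/3, c = (3λ−5)/4, d = (7−3λ)/2. Define the following operators on H ⊕ H ⊕ H, written as 3×3 operator matrices (scalars denote scalar multiples of the identity on H): Q₁ = [[a,3a,b],[a,3a,b],[a,3a,b]], Q₂ = [[a,−3a,b],[−a,3a,−b],[a,−3a,b]], Q₃ = [[4a,0,−2b],[0,0,0],[−2a,0,b]], Q₄ = [[2c,0,2dcS₁*],[0,2c,2dcS₂*],[S₁,S₂,d]], Q₅ = [[2c,0,−2dcS₁*],[0,2c,−2dcS₂*],[−S₁,−S₂,d]]. Then Qᵢ² = Qᵢ for i = 1,…,5 and Q₁ + Q₂ + Q₃ + Q₄ + Q₅ = λ·I on H ⊕ H ⊕ H. -/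
open ContinuousLinearMap

/-- Given a representation `S₁, S₂` of the Cuntz algebra `O₂` on a complex Hilbert
space `H` and `λ ∈ ℂ`, the five explicit operator matrices `Q₁, …, Q₅` on `H ⊕ H ⊕ H`
are idempotents summing to `λ·I`. -/
theorem five_idempotents_from_cuntz
    {H : Type*} [NormedAddCommGroup H] [InnerProductSpace ℂ H] [CompleteSpace H]
    (S₁ S₂ : H →L[ℂ] H)
    (hS₁ : adjoint S₁ ∘L S₁ = 1)
    (hS₂ : adjoint S₂ ∘L S₂ = 1)
    (hS₁₂ : adjoint S₁ ∘L S₂ = 0)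
    (hranges : S₁ ∘L adjoint S₁ + S₂ ∘L adjoint S₂ = 1)
    (lam a b c d : ℂ)
    (ha : a = (5 - 2 * lam) / 6) (hb : b = (4 * lam - 7) / 3)
    (hc : c = (3 * lam - 5) / 4) (hd : d = (7 - 3 * lam) / 2)
    (Q : Fin 5 → (H × H × H) →L[ℂ] (H × H × H))
    (hQ₁ : ∀ x y z : H, Q 0 (x, y, z) =
      (a • x + (3 * a) • y + b • z, a • x + (3 * a) • y + b • z,
        a • x + (3 * a) • y + b • z))
    (hQ₂ : ∀ x y z : H, Q 1 (x, y, z) =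
      (a • x - (3 * a) • y + b • z, -(a • x) + (3 * a) • y - b • z,
        a • x - (3 * a) • y + b • z))
    (hQ₃ : ∀ x y z : H, Q 2 (x, y, z) =
      ((4 * a) • x - (2 * b) • z, 0, -((2 * a) • x) + b • z))
    (hQ₄ : ∀ x y z : H, Q 3 (x, y, z) =
      ((2 * c) • x + (2 * d * c) • (adjoint S₁ z),
        (2 * c) • y + (2 * d * c) • (adjoint S₂ z),
        S₁ x + S₂ y + d • z))
    (hQ₅ : ∀ x y z : H, Q 4 (x, y, z) =
      ((2 * c) • x - (2 * d * c) • (adjoint S₁ z),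
        (2 * c) • y - (2 * d * c) • (adjoint S₂ z),
        -(S₁ x) - S₂ y + d • z)) :
    (∀ i, Q i ∘L Q i = Q i) ∧
    ∑ i, Q i = lam • (1 : (H × H × H) →L[ℂ] (H × H × H)) := by
  have hS₂₁ : adjoint S₂ ∘L S₁ = 0 := by
    simpa [adjoint_comp] using congrArg adjoint hS₁₂
  have h₁₁ (x : H) : adjoint S₁ (S₁ x) = x := DFunLike.congr_fun hS₁ x
  have h₂₂ (x : H) : adjoint S₂ (S₂ x) = x := DFunLike.congr_fun hS₂ x
  have h₁₂ (x : H) : adjoint S₁ (S₂ x) = 0 := DFunLike.congr_fun hS₁₂ x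
  have h₂₁ (x : H) : adjoint S₂ (S₁ x) = 0 := DFunLike.congr_fun hS₂₁ x
  have hsum (x : H) : S₁ (adjoint S₁ x) = x - S₂ (adjoint S₂ x) :=
    eq_sub_of_add_eq (DFunLike.congr_fun hranges x)
  subst ha hb hc hd
  constructor
  · intro i
    refine ContinuousLinearMap.ext fun ⟨x, y, z⟩ => ?_
    fin_cases i <;>
      simp only [Fin.zero_eta, Fin.mk_one, Fin.reduceFinMk, comp_apply, hQ₁, hQ₂, hQ₃, hQ₄, hQ₅,
        map_add, map_sub, map_neg, map_smul, h₁₁, h₂₂, h₁₂, h₂₁, hsum, Prod.mk.injEq] <;>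
      refine ⟨?_, ?_, ?_⟩ <;> first | trivial | module
  · refine ContinuousLinearMap.ext fun ⟨x, y, z⟩ => ?_
    simp only [Fin.sum_univ_five, add_apply, smul_apply, one_def, id_apply, hQ₁, hQ₂, hQ₃, hQ₄, hQ₅,
      Prod.mk_add_mk, Prod.smul_mk, Prod.mk.injEq]
    refine ⟨?_, ?_, ?_⟩ <;> module
end

section
/- For every natural number n ≥ 5 and every λ ∈ ℂ there exist a nonzero complex Hilbert space H and bounded linear operators Q₁, …, Qₙ on H with Qₖ² = Qₖ for all k and Q₁ + ⋯ + Qₙ = λ·I. -/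
open scoped lp InnerProductSpace

/-- In a complex algebra containing a Cuntz pair, every scalar is a sum of five idempotents.
With `t = 5 - 2λ`, the first three have rank one in the `3 × 3` matrix units built from
`a₁, a₂a₁, a₂a₂` and sum to `t + 3 (1 - t) a₁b₁`; the last two sum to the complementary
`(7 - 3λ) a₁b₁ + (3λ - 5) a₂b₂`. -/
theorem exists_five_idempotents_sum_eq_smul_one {R : Type*} [Ring R] [Algebra ℂ R]
    {a₁ a₂ b₁ b₂ : R} (h₁₁ : b₁ * a₁ = 1) (h₁₂ : b₁ * a₂ = 0) (h₂₁ : b₂ * a₁ = 0)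
    (h₂₂ : b₂ * a₂ = 1) (h : a₁ * b₁ + a₂ * b₂ = 1) (lam : ℂ) :
    ∃ q : Fin 5 → R, (∀ k, q k ^ 2 = q k) ∧ ∑ k, q k = lam • (1 : R) := by
  have idem {w z : R} (hzw : z * w = 1) : (w * z) ^ 2 = w * z := by
    rw [sq, mul_assoc, ← mul_assoc z, hzw, one_mul]
  have k₁₂ (r : R) : b₁ * (a₂ * r) = 0 := by rw [← mul_assoc, h₁₂, zero_mul]
  have k₂₂ (r : R) : b₂ * (a₂ * r) = r := by rw [← mul_assoc, h₂₂, one_mul]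
  have h' : a₂ * (a₁ * (b₁ * b₂)) + a₂ * (a₂ * (b₂ * b₂)) = a₂ * b₂ := by
    calc _ = a₂ * ((a₁ * b₁ + a₂ * b₂) * b₂) := by noncomm_ring
      _ = _ := by rw [h, one_mul]
  let t : ℂ := 5 - 2 * lam
  let k : ℂ := 6 - 3 * lam
  refine ⟨![(a₁ + a₂ * a₁) *
        ((1 - 2 / 3 * t) • b₁ + (2 / 3 * t) • (b₁ * b₂) + (1 / 3 * t) • (b₂ * b₂)),
      (a₁ - a₂ * a₁ + a₂ * a₂) *
        ((1 - 2 / 3 * t) • b₁ + (-1 / 3 * t) • (b₁ * b₂) + (1 / 3 * t) • (b₂ * b₂)),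
      (a₁ - a₂ * a₂) *
        ((1 - 2 / 3 * t) • b₁ + (-1 / 3 * t) • (b₁ * b₂) + (-2 / 3 * t) • (b₂ * b₂)),
      ((1 + k) • a₁ + a₂) * ((1 / 2 : ℂ) • (b₁ + (1 - k) • b₂)),
      ((1 + k) • a₁ - a₂) * ((1 / 2 : ℂ) • (b₁ - (1 - k) • b₂))], ?_, ?_⟩
  · intro i
    fin_cases i <;> apply idem <;>
      simp only [mul_add, add_mul, mul_sub, sub_mul, smul_mul_assoc, mul_smul_comm, mul_assoc,
        h₁₁, h₁₂, h₂₁, h₂₂, k₁₂, k₂₂, mul_zero, smul_add, smul_sub, smul_smul] <;>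
      module
  · rw [← h]
    simp only [Fin.sum_univ_five, Matrix.cons_val]
    simp only [mul_add, add_mul, mul_sub, sub_mul, smul_mul_assoc, mul_smul_comm, mul_assoc,
      smul_add, smul_sub, smul_smul, ← h']
    simp only [t, k]
    module

/-- An injective `f : ℕ → ℕ` induces an isometry of `ℓ²(ℕ)` whose adjoint is composition
with `f`. -/
theorem exists_isometry_adjoint_apply {f : ℕ → ℕ} (hf : f.Injective) :
    ∃ a : ℓ²(ℕ, ℂ) →L[ℂ] ℓ²(ℕ, ℂ), star a * a = 1 ∧ ∀ x n, star a x n = x (f n) := by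
  have hv : Orthonormal ℂ fun n => (lp.single 2 (f n) (1 : ℂ) : ℓ²(ℕ, ℂ)) := by
    rw [orthonormal_iff_ite]
    intro i j
    simp [lp.inner_single_left, lp.single_apply, Pi.single_apply, hf.eq_iff]
  let a := hv.orthogonalFamily.linearIsometry
  have ha (n : ℕ) : a (lp.single 2 n 1) = lp.single 2 (f n) 1 :=
    (hv.orthogonalFamily.linearIsometry_apply_single (i := n) (1 : ℂ)).trans (by simp)
  refine ⟨a.toContinuousLinearMap, ?_, fun x n => ?_⟩
  · exact (ContinuousLinearMap.norm_map_iff_adjoint_comp_self _).1 a.norm_map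
  · calc
      _ = ⟪lp.single 2 n (1 : ℂ), star a.toContinuousLinearMap x⟫_ℂ := by
        simp [lp.inner_single_left]
      _ = ⟪a (lp.single 2 n (1 : ℂ)), x⟫_ℂ := by
        rw [ContinuousLinearMap.star_eq_adjoint, ContinuousLinearMap.adjoint_inner_right]; rfl
      _ = x (f n) := by simp [ha, lp.inner_single_left]

/-- The Cuntz algebra `O₂` is represented on `ℓ²(ℕ)`. -/
theorem exists_cuntz_pair :
    ∃ a₁ a₂ : ℓ²(ℕ, ℂ) →L[ℂ] ℓ²(ℕ, ℂ), star a₁ * a₁ = 1 ∧ star a₂ * a₂ = 1 ∧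
      star a₁ * a₂ = 0 ∧ a₁ * star a₁ + a₂ * star a₂ = 1 := by
  obtain ⟨a₁, h₁, e₁⟩ := exists_isometry_adjoint_apply (f := fun n => 2 * n)
    fun m n h => by simpa using h
  obtain ⟨a₂, h₂, e₂⟩ := exists_isometry_adjoint_apply (f := fun n => 2 * n + 1)
    fun m n h => by simpa using h
  have h₁₂ : star a₁ * a₂ = 0 := by
    ext x n
    have hs : star a₂ (lp.single 2 (2 * n) (1 : ℂ)) = 0 := by
      ext m
      rw [e₂, lp.single_apply, Pi.single_eq_of_ne (by lia)]
      rfl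
    calc
      star a₁ (a₂ x) n = ⟪lp.single 2 (2 * n) (1 : ℂ), a₂ x⟫_ℂ := by
        simp [e₁, lp.inner_single_left]
      _ = 0 := by
        rw [← ContinuousLinearMap.adjoint_inner_left, ← ContinuousLinearMap.star_eq_adjoint, hs,
          inner_zero_left]
  have h₂₁ : star a₂ * a₁ = 0 := by simpa using congrArg star h₁₂
  refine ⟨a₁, a₂, h₁, h₂, h₁₂, ?_⟩
  have hl : star a₁ * (a₁ * star a₁ + a₂ * star a₂) = star a₁ := by
    rw [mul_add, ← mul_assoc, ← mul_assoc, h₁, h₁₂, one_mul, zero_mul, add_zero]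
  have hr : star a₂ * (a₁ * star a₁ + a₂ * star a₂) = star a₂ := by
    rw [mul_add, ← mul_assoc, ← mul_assoc, h₂, h₂₁, one_mul, zero_mul, zero_add]
  ext x n
  obtain ⟨m, rfl | rfl⟩ := n.even_or_odd'
  · rw [← e₁, ← mul_apply_eq_comp, hl, e₁]; rfl
  · rw [← e₂, ← mul_apply_eq_comp, hr, e₂]; rfl

/-- For every `n ≥ 5` and every `λ ∈ ℂ` there exist `n` bounded idempotent operators
on a nonzero complex Hilbert space summing to `λ·I`. -/
theorem n_bounded_idempotents_any_lambda (n : ℕ) (hn : 5 ≤ n) (lam : ℂ) :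
    ∃ (H : Type) (_ : NormedAddCommGroup H) (_ : InnerProductSpace ℂ H)
      (_ : CompleteSpace H) (_ : Nontrivial H) (Q : Fin n → H →L[ℂ] H),
      (∀ k, Q k ^ 2 = Q k) ∧ ∑ k, Q k = lam • (1 : H →L[ℂ] H) := by
  obtain ⟨a₁, a₂, h₁, h₂, h₁₂, h⟩ := exists_cuntz_pair
  obtain ⟨q, hq, hsum⟩ := exists_five_idempotents_sum_eq_smul_one h₁ h₁₂
    (by simpa using congrArg star h₁₂) h₂ h lam
  obtain ⟨m, rfl⟩ := Nat.exists_eq_add_of_le hn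
  have : Nontrivial ℓ²(ℕ, ℂ) :=
    ⟨lp.single 2 0 1, 0, fun h0 => by simpa using congrArg (fun x : ℓ²(ℕ, ℂ) => x 0) h0⟩
  refine ⟨ℓ²(ℕ, ℂ), inferInstance, inferInstance, inferInstance, this,
    Fin.append q fun _ : Fin m => 0, fun k => ?_, ?_⟩
  · induction k using Fin.addCases <;> simp [hq]
  · simp [Fin.sum_univ_add, hsum]
end

section
/- Let V be the complex vector space of finitely supported functions from ℝ to ℂ, with canonical basis (e_μ)_{μ∈ℝ}. Define linear maps p, r, s on V by p(e_μ) = μ·e_μ, r(e_μ) = (1−μ)·e_{1−μ}, s(e_μ) = −(1+μ)·e_{−1−μ}, and set q₁ = p + r, q₂ = p − r, q₃ = −p + s, q₄ = −p − s. Then qᵢ² = qᵢ for i = 1,2,3,4, q₁ + q₂ + q₃ + q₄ = 0, and q₁ ≠ 0 (indeed q₁(e₀) = e₁). -/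
/-- On the space `ℝ →₀ ℂ` of finitely supported functions with canonical basis
`e_μ = Finsupp.single μ 1`, the operators `p, r, s` acting by
`p e_μ = μ e_μ`, `r e_μ = (1−μ) e_{1−μ}`, `s e_μ = −(1+μ) e_{−1−μ}` give rise to
idempotents `q₁ = p+r`, `q₂ = p−r`, `q₃ = −p+s`, `q₄ = −p−s` with zero sum and
`q₁ ≠ 0` (indeed `q₁ e₀ = e₁`). -/
theorem unbounded_idempotents_zero_sum
    (p r s : (ℝ →₀ ℂ) →ₗ[ℂ] (ℝ →₀ ℂ))
    (hp : ∀ μ : ℝ, p (Finsupp.single μ 1) = (μ : ℂ) • Finsupp.single μ 1)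
    (hr : ∀ μ : ℝ, r (Finsupp.single μ 1) = ((1 - μ : ℝ) : ℂ) • Finsupp.single (1 - μ) 1)
    (hs : ∀ μ : ℝ, s (Finsupp.single μ 1) = (-(1 + μ : ℝ) : ℂ) • Finsupp.single (-1 - μ) 1)
    (q₁ q₂ q₃ q₄ : (ℝ →₀ ℂ) →ₗ[ℂ] (ℝ →₀ ℂ))
    (h₁ : q₁ = p + r) (h₂ : q₂ = p - r) (h₃ : q₃ = -p + s) (h₄ : q₄ = -p - s) :
    (q₁ ∘ₗ q₁ = q₁ ∧ q₂ ∘ₗ q₂ = q₂ ∧ q₃ ∘ₗ q₃ = q₃ ∧ q₄ ∘ₗ q₄ = q₄) ∧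
    q₁ + q₂ + q₃ + q₄ = 0 ∧
    q₁ ≠ 0 ∧ q₁ (Finsupp.single 0 1) = Finsupp.single 1 1 := by
  have q₁_zero : q₁ (Finsupp.single 0 1) = Finsupp.single 1 1 := by
    simp [h₁, hp, hr]
  refine ⟨⟨?_, ?_, ?_, ?_⟩, ?_, ?_, q₁_zero⟩
  · subst h₁
    ext1 μ
    ext1
    simp only [LinearMap.comp_apply, Finsupp.lsingle_apply, LinearMap.add_apply, map_add,
      map_smul, hp, hr, sub_sub_cancel]
    push_cast
    module
  · subst h₂
    ext1 μ
    ext1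
    simp only [LinearMap.comp_apply, Finsupp.lsingle_apply, LinearMap.sub_apply, map_sub,
      map_smul, hp, hr, sub_sub_cancel]
    push_cast
    module
  · subst h₃
    ext1 μ
    ext1
    simp only [LinearMap.comp_apply, Finsupp.lsingle_apply, LinearMap.add_apply,
      LinearMap.neg_apply, map_add, map_neg, map_smul, hp, hs, sub_sub_cancel]
    push_cast
    module
  · subst h₄
    ext1 μ
    ext1
    simp only [LinearMap.comp_apply, Finsupp.lsingle_apply, LinearMap.sub_apply,
      LinearMap.neg_apply, map_sub, map_neg, map_smul, hp, hs, sub_sub_cancel]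
    push_cast
    module
  · rw [h₁, h₂, h₃, h₄]
    abel
  · intro h
    simp [h, eq_comm] at q₁_zero
end

section
/- Let A be a complex unital Banach algebra and let q₁, q₂, q₃, q₄ ∈ A be idempotents with q₁ + q₂ + q₃ + q₄ = 0. Then q₁ = q₂ = q₃ = q₄ = 0. In particular, if four bounded linear operators on a complex Hilbert space are idempotent and sum to the zero operator, then each of them is the zero operator. -/
open Polynomial in
theorem SemiconjBy.aeval_right {R A : Type*} [CommSemiring R] [Semiring A] [Algebra R A]
    {x a b : A} (h : SemiconjBy x a b) (f : R[X]) : SemiconjBy x (aeval a f) (aeval b f) := by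
  induction f using Polynomial.induction_on' with
  | add f g hf hg => simpa using hf.add_right hg
  | monomial n r =>
    simp only [aeval_monomial]
    exact SemiconjBy.mul_right (Algebra.commutes r x).symm (h.pow_right n)

/-- In a normed algebra, an element shifting another one by a nonzero scalar is nilpotent. -/
theorem isNilpotent_of_semiconjBy_sub {𝕜 A : Type*} [RCLike 𝕜] [NormedRing A] [NormedAlgebra 𝕜 A]
    {x a : A} {c : 𝕜} (hc : c ≠ 0) (h : SemiconjBy x a (a - algebraMap 𝕜 A c)) :
    IsNilpotent x := by
  have hpow (k : ℕ) : x ^ k * a = a * x ^ k - (k * c) • x ^ k := by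
    induction k with
    | zero => simp
    | succ k ih =>
      have h' : x * a = a * x - c • x := by
        rw [h.eq, sub_mul, Algebra.smul_def]
      calc x ^ (k + 1) * a = x * (x ^ k * a) := by rw [pow_succ', mul_assoc]
        _ = x * a * x ^ k - (k * c) • x ^ (k + 1) := by
          rw [ih, mul_sub, mul_smul_comm, ← pow_succ', mul_assoc]
        _ = a * x ^ (k + 1) - ((k + 1 : ℕ) * c) • x ^ (k + 1) := by
          rw [h', sub_mul, smul_mul_assoc, mul_assoc, ← pow_succ']
          push_cast
          module
  obtain ⟨k, hk⟩ := exists_nat_gt (2 * ‖a‖ / ‖c‖)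
  rw [div_lt_iff₀ (norm_pos_iff.mpr hc)] at hk
  refine ⟨k, norm_le_zero_iff.mp ?_⟩
  have hbound : (k * ‖c‖) * ‖x ^ k‖ ≤ 2 * ‖a‖ * ‖x ^ k‖ := by
    have heq : (k * c) • x ^ k = a * x ^ k - x ^ k * a := by rw [hpow k]; abel
    calc (k * ‖c‖) * ‖x ^ k‖ = ‖(k * c) • x ^ k‖ := by simp [norm_smul]
      _ ≤ ‖a * x ^ k‖ + ‖x ^ k * a‖ := heq ▸ norm_sub_le _ _
      _ ≤ ‖a‖ * ‖x ^ k‖ + ‖x ^ k‖ * ‖a‖ := add_le_add (norm_mul_le _ _) (norm_mul_le _ _)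
      _ = 2 * ‖a‖ * ‖x ^ k‖ := by ring
  by_contra! hpos
  exact absurd (le_of_mul_le_mul_right hbound hpos) (not_le.mpr hk)

theorem IsIdempotentElem.sub_mul_sub_self {R : Type*} [Ring R] {p q : R}
    (hp : IsIdempotentElem p) (hq : IsIdempotentElem q) :
    (p - q) * (p - q) = (p + q) * (2 - (p + q)) := by
  simp only [mul_sub, sub_mul, mul_add, add_mul, hp.eq, hq.eq, mul_two]
  abel

theorem IsIdempotentElem.semiconjBy_sub_add {R : Type*} [Ring R] {p q : R}
    (hp : IsIdempotentElem p) (hq : IsIdempotentElem q) :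
    SemiconjBy (p - q) (p + q) (2 - (p + q)) := by
  simp only [SemiconjBy, mul_sub, sub_mul, mul_add, add_mul, hp.eq, hq.eq, two_mul]
  abel

section FourIdempotents

variable {A : Type*} {p q r s : A}

theorem semiconjBy_sub_mul_sub [Ring A] (hp : IsIdempotentElem p) (hq : IsIdempotentElem q)
    (hr : IsIdempotentElem r) (hs : IsIdempotentElem s) (hsum : p + q + (r + s) = 0) :
    SemiconjBy ((p - q) * (r - s)) (p + q) (p + q - 4) := by
  have h := hr.semiconjBy_sub_add hs
  rw [← neg_eq_of_add_eq_zero_right hsum, SemiconjBy.neg_right_iff.symm] at h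
  have h2 : SemiconjBy (p - q) (-(2 - -(p + q))) (p + q - 4) := by
    have := (((Commute.ofNat_right (p - q) 2).semiconjBy).add_right
      (hp.semiconjBy_sub_add hq)).neg_right
    have h4 : (4 : A) = 2 + 2 := by norm_num
    rw [h4]
    convert this using 1
    · rw [sub_neg_eq_add]
    · change _ = -((2 : A) + (2 - (p + q)))
      abel
  rw [neg_neg] at h
  exact h2.mul_left h

theorem sub_mul_sub_mul_sub_mul_sub [Ring A] (hp : IsIdempotentElem p) (hq : IsIdempotentElem q)
    (hr : IsIdempotentElem r) (hs : IsIdempotentElem s) (hsum : p + q + (r + s) = 0) :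
    (p - q) * (r - s) * ((r - s) * (p - q)) =
      (p + q) * ((2 - (p + q)) ^ 2 * (p + q - 4)) := by
  have h := hp.semiconjBy_sub_add hq
  have h2 := ((h.mul_right (((Commute.ofNat_right (p - q) 2).semiconjBy).add_right h)).neg_right).eq
  calc (p - q) * (r - s) * ((r - s) * (p - q))
      = (p - q) * ((r - s) * (r - s)) * (p - q) := by simp only [mul_assoc]
    _ = (p - q) * -((p + q) * (2 + (p + q))) * (p - q) := by
      rw [hr.sub_mul_sub_self hs, ← neg_eq_of_add_eq_zero_right hsum, sub_neg_eq_add, neg_mul]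
    _ = -((2 - (p + q)) * (2 + (2 - (p + q)))) * ((p + q) * (2 - (p + q))) := by
      rw [h2, mul_assoc, hp.sub_mul_sub_self hq]
    _ = _ := by
      generalize p + q = n
      noncomm_ring

open Polynomial in
/-- The product of opposite alternating words is a polynomial in `p + q` whose only root outside
the open right half-plane is a simple root at `0`. -/
theorem exists_polynomial_alternating_product [Ring A] [Algebra ℂ A]
    (hp : IsIdempotentElem p) (hq : IsIdempotentElem q)
    (hr : IsIdempotentElem r) (hs : IsIdempotentElem s) (hsum : p + q + (r + s) = 0) (k : ℕ) :
    ∃ u : ℂ[X], (∀ z, u.eval z = 0 → 0 < z.re) ∧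
      ((p - q) * (r - s)) ^ (k + 1) * ((r - s) * (p - q)) ^ (k + 1) =
        aeval (p + q) (X * u) := by
  have hbase := sub_mul_sub_mul_sub_mul_sub hp hq hr hs hsum
  have hshift := semiconjBy_sub_mul_sub hp hq hr hs hsum
  have hfactor (z : ℂ) (hz : ((2 - X) ^ 2 * (X - 4) : ℂ[X]).eval z = 0) : 0 < z.re := by
    have hz' : 2 - z = 0 ∨ z - 4 = 0 := by simpa using hz
    rcases hz' with h | h
    · simp [← sub_eq_zero.mp h]
    · simp [sub_eq_zero.mp h]
  induction k with
  | zero => exact ⟨(2 - X) ^ 2 * (X - 4), hfactor, by simpa [map_ofNat] using hbase⟩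
  | succ k ih =>
    obtain ⟨u, hu, hprod⟩ := ih
    refine ⟨(X * u).comp (X - 4) * ((2 - X) ^ 2 * (X - 4)), fun z hz => ?_, ?_⟩
    · rw [eval_mul, mul_eq_zero] at hz
      rcases hz with hz | hz
      · have hz' : z - 4 = 0 ∨ u.eval (z - 4) = 0 := by simpa using hz
        rcases hz' with h | h
        · simp [sub_eq_zero.mp h]
        · have := hu _ h
          simp only [Complex.sub_re, Complex.re_ofNat] at this
          linarith
      · exact hfactor z hz
    · have hconj := (hshift.aeval_right (X * u)).eq
      rw [pow_succ' _ (k + 1), pow_succ _ (k + 1), mul_assoc, ← mul_assoc (_ ^ (k + 1)), hprod,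
        ← mul_assoc, hconj, mul_assoc, hbase, mul_left_comm X, map_mul (aeval (p + q)), aeval_comp]
      simp [map_ofNat]

theorem add_eq_zero_of_four_idempotents_sum_zero [NormedRing A] [NormedAlgebra ℂ A]
    (hp : IsIdempotentElem p) (hq : IsIdempotentElem q)
    (hr : IsIdempotentElem r) (hs : IsIdempotentElem s) (hsum : p + q + (r + s) = 0) :
    p + q = 0 := by
  have hnil : IsNilpotent ((p - q) * (r - s)) :=
    isNilpotent_of_semiconjBy_sub (a := p + q) (c := (4 : ℂ)) (by norm_num)
      (by simpa [map_ofNat] using semiconjBy_sub_mul_sub hp hq hr hs hsum)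
  obtain ⟨k, hk⟩ := hnil
  have hk' : ((p - q) * (r - s)) ^ (k + 1) = 0 := by rw [pow_succ, hk, zero_mul]
  obtain ⟨u, hu, hprod⟩ := exists_polynomial_alternating_product hp hq hr hs hsum k
  obtain ⟨v, hv, hprod'⟩ := exists_polynomial_alternating_product hr hs hp hq
    (by rwa [add_comm]) k
  rw [hk', zero_mul] at hprod
  rw [hk', mul_zero, ← neg_eq_of_add_eq_zero_right hsum] at hprod'
  have hcop : IsCoprime u (v.comp (-Polynomial.X)) := by
    refine (Polynomial.isCoprime_iff_aeval_ne_zero_of_isAlgClosed ℂ ℂ _ _).mpr fun z => ?_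
    by_contra! h
    have h₁ := hu z (by simpa using h.1)
    have h₂ := hv (-z) (by simpa using h.2)
    simp only [Complex.neg_re] at h₂
    linarith
  obtain ⟨a, b, hab⟩ := hcop
  have hu0 : (p + q) * Polynomial.aeval (p + q) u = 0 := by simpa using hprod.symm
  have hv0 : (p + q) * Polynomial.aeval (p + q) (v.comp (-Polynomial.X)) = 0 := by
    rw [map_mul, Polynomial.aeval_X, neg_mul, zero_eq_neg] at hprod'
    simpa only [Polynomial.aeval_comp, map_neg, Polynomial.aeval_X] using hprod'
  have hone := congrArg (Polynomial.aeval (p + q)) hab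
  rw [mul_comm a, mul_comm b, map_add, map_mul, map_mul, map_one] at hone
  rw [← mul_one (p + q), ← hone, mul_add, ← mul_assoc, ← mul_assoc, hu0, hv0]
  simp

theorem IsIdempotentElem.eq_zero_of_add_eq_zero [Ring A] [Algebra ℂ A]
    (hp : IsIdempotentElem p) (hq : IsIdempotentElem q) (h : p + q = 0) : p = 0 := by
  have hq' := hq.eq
  rw [← neg_eq_of_add_eq_zero_right h, neg_mul_neg, hp.eq] at hq'
  have h2 : (2 : ℂ) • p = 0 := by rw [two_smul]; exact eq_neg_iff_add_eq_zero.mp hq'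
  exact (smul_eq_zero.mp h2).resolve_left two_ne_zero

theorem four_idempotents_eq_zero [NormedRing A] [NormedAlgebra ℂ A]
    (hp : p ^ 2 = p) (hq : q ^ 2 = q) (hr : r ^ 2 = r) (hs : s ^ 2 = s)
    (hsum : p + q + r + s = 0) : p = 0 ∧ q = 0 ∧ r = 0 ∧ s = 0 := by
  rw [sq] at hp hq hr hs
  rw [add_assoc] at hsum
  have hpq : p + q = 0 := add_eq_zero_of_four_idempotents_sum_zero hp hq hr hs hsum
  have hrs : r + s = 0 := by rwa [hpq, zero_add] at hsum
  have hp0 : p = 0 := IsIdempotentElem.eq_zero_of_add_eq_zero hp hq hpq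
  have hr0 : r = 0 := IsIdempotentElem.eq_zero_of_add_eq_zero hr hs hrs
  exact ⟨hp0, by rwa [hp0, zero_add] at hpq, hr0, by rwa [hr0, zero_add] at hrs⟩

end FourIdempotents

/-- In a complex unital Banach algebra, four idempotents summing to zero are all
zero. In particular, four bounded idempotent operators on a complex Hilbert space
summing to the zero operator are all zero. -/
theorem four_idempotents_sum_zero_banach
    {A : Type*} [NormedRing A] [NormedAlgebra ℂ A] [CompleteSpace A]
    (q₁ q₂ q₃ q₄ : A)
    (h₁ : q₁ ^ 2 = q₁) (h₂ : q₂ ^ 2 = q₂) (h₃ : q₃ ^ 2 = q₃) (h₄ : q₄ ^ 2 = q₄)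
    (hsum : q₁ + q₂ + q₃ + q₄ = 0) :
    (q₁ = 0 ∧ q₂ = 0 ∧ q₃ = 0 ∧ q₄ = 0) ∧
    ∀ (H : Type) [NormedAddCommGroup H] [InnerProductSpace ℂ H] [CompleteSpace H]
      (Q₁ Q₂ Q₃ Q₄ : H →L[ℂ] H),
      Q₁ ^ 2 = Q₁ → Q₂ ^ 2 = Q₂ → Q₃ ^ 2 = Q₃ → Q₄ ^ 2 = Q₄ →
      Q₁ + Q₂ + Q₃ + Q₄ = 0 →
      Q₁ = 0 ∧ Q₂ = 0 ∧ Q₃ = 0 ∧ Q₄ = 0 := by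
  exact ⟨four_idempotents_eq_zero h₁ h₂ h₃ h₄ hsum, fun _ _ _ _ _ _ _ _ k₁ k₂ k₃ k₄ ksum =>
    four_idempotents_eq_zero k₁ k₂ k₃ k₄ ksum⟩
end
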